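/- Let b ∈ L¹_loc(ℝⁿ), 1 < p ≤ q < ∞, α/n = 1/p − 1/q, and φ, ψ ∈ Φ_w(ℝⁿ) be such that φ⁻¹(x,t) ≈ t^{α/n}·ψ⁻¹(x,t). Let r ∈ (α/n, 1/p] and assume φ satisfies (A0), (A1), (A2), (aInc)_p and (aDec)_{1/r}. Then the fractional maximal commutator M_{b,α} is bounded from L^φ(ℝⁿ) to L^ψ(ℝⁿ) with ‖M_{b,α} f‖_{L^ψ(ℝⁿ)} ≤ C‖b‖_*‖f‖_{L^φ(ℝⁿ)} if and only if b ∈ BMO(ℝⁿ). -/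

import Mathlib

open MeasureTheory NNReal ENNReal Filter Set

noncomputable section

/-- `ℝⁿ` with the Euclidean structure. -/
abbrev RSp (n : ℕ) := EuclideanSpace ℝ (Fin n)

variable {n : ℕ}

/-- A cube in `ℝⁿ` with sides parallel to the coordinate axes,
with center `c` and side length `2r`. -/
structure Cube (n : ℕ) where
  c : RSp n
  r : ℝ
  r_pos : 0 < r

/-- The underlying set of a cube. -/
def Cube.set (Q : Cube n) : Set (RSp n) := {y | ∀ i, |y i - Q.c i| ≤ Q.r}

/-- A weak Φ-function on `Ω` (the class `Φ_w(Ω)`). -/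
structure IsWeakPhi (Ω : Set (RSp n)) (φ : RSp n → ℝ≥0 → ℝ≥0∞) : Prop where
  meas : ∀ f : RSp n → ℝ≥0, Measurable f →
    AEMeasurable (fun x => φ x (f x)) (volume.restrict Ω)
  mono : ∀ x ∈ Ω, Monotone (φ x)
  zero : ∀ x ∈ Ω, φ x 0 = 0
  lim_zero : ∀ x ∈ Ω, Tendsto (fun t : ℝ≥0 => φ x t) (nhdsWithin 0 (Set.Ioi 0)) (nhds 0)
  lim_top : ∀ x ∈ Ω, Tendsto (fun t : ℝ≥0 => φ x t) atTop (nhds ∞)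
  almost_inc : ∃ L : ℝ≥0, 1 ≤ L ∧ ∀ x ∈ Ω, ∀ s t : ℝ≥0, 0 < s → s < t →
    φ x s / (s : ℝ≥0∞) ≤ (L : ℝ≥0∞) * (φ x t / (t : ℝ≥0∞))

/-- A convex Φ-function on `Ω` (the class `Φ_c(Ω)`): a weak Φ-function which is
additionally convex and left-continuous in `t` for a.e. `x ∈ Ω`. -/
structure IsConvexPhi (Ω : Set (RSp n)) (φ : RSp n → ℝ≥0 → ℝ≥0∞)
    extends IsWeakPhi Ω φ : Prop where
  convex : ∀ᵐ x ∂(volume.restrict Ω), ∀ s t a b : ℝ≥0, a + b = 1 →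
    φ x (a * s + b * t) ≤ (a : ℝ≥0∞) * φ x s + (b : ℝ≥0∞) * φ x t
  left_cont : ∀ᵐ x ∂(volume.restrict Ω), ∀ t : ℝ≥0,
    Tendsto (φ x) (nhdsWithin t (Set.Iio t)) (nhds (φ x t))

/-- A strong Φ-function on `Ω` (the class `Φ_s(Ω)`): a weak Φ-function which is
additionally convex and continuous into `[0,∞]` for a.e. `x ∈ Ω`. -/
structure IsStrongPhi (Ω : Set (RSp n)) (φ : RSp n → ℝ≥0 → ℝ≥0∞)
    extends IsWeakPhi Ω φ : Prop where
  convex : ∀ᵐ x ∂(volume.restrict Ω), ∀ s t a b : ℝ≥0, a + b = 1 →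
    φ x (a * s + b * t) ≤ (a : ℝ≥0∞) * φ x s + (b : ℝ≥0∞) * φ x t
  cont : ∀ᵐ x ∂(volume.restrict Ω), Continuous (φ x)

/-- The generalized (left-)inverse `φ⁻¹(x,t) = inf {τ ≥ 0 : φ(x,τ) ≥ t}`. -/
def phiInv (φ : RSp n → ℝ≥0 → ℝ≥0∞) (x : RSp n) (t : ℝ≥0∞) : ℝ≥0∞ :=
  sInf ((fun s : ℝ≥0 => (s : ℝ≥0∞)) '' {s : ℝ≥0 | t ≤ φ x s})

/-- The condition `(aInc)_p` on `Ω`: `t ↦ φ(x,t)/t^p` is almost increasing, uniformly in `x`. -/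
def AInc (p : ℝ) (Ω : Set (RSp n)) (φ : RSp n → ℝ≥0 → ℝ≥0∞) : Prop :=
  ∃ L : ℝ≥0, 1 ≤ L ∧ ∀ x ∈ Ω, ∀ s t : ℝ≥0, 0 < s → s < t →
    φ x s / (s : ℝ≥0∞) ^ p ≤ (L : ℝ≥0∞) * (φ x t / (t : ℝ≥0∞) ^ p)

/-- The condition `(aDec)_q` on `Ω`: `t ↦ φ(x,t)/t^q` is almost decreasing, uniformly in `x`. -/
def ADec (q : ℝ) (Ω : Set (RSp n)) (φ : RSp n → ℝ≥0 → ℝ≥0∞) : Prop :=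
  ∃ L : ℝ≥0, 1 ≤ L ∧ ∀ x ∈ Ω, ∀ s t : ℝ≥0, 0 < s → s < t →
    φ x t / (t : ℝ≥0∞) ^ q ≤ (L : ℝ≥0∞) * (φ x s / (s : ℝ≥0∞) ^ q)

/-- The condition `(A0)` on `Ω`: `β ≤ φ⁻¹(x,1) ≤ 1/β` for a.e. `x ∈ Ω`. -/
def A0 (Ω : Set (RSp n)) (φ : RSp n → ℝ≥0 → ℝ≥0∞) : Prop :=
  ∃ β : ℝ≥0, 0 < β ∧ β ≤ 1 ∧ ∀ᵐ x ∂(volume.restrict Ω),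
    (β : ℝ≥0∞) ≤ phiInv φ x 1 ∧ phiInv φ x 1 ≤ (β : ℝ≥0∞)⁻¹

/-- The condition `(A1)` (on all of `ℝⁿ`). -/
def A1 (φ : RSp n → ℝ≥0 → ℝ≥0∞) : Prop :=
  ∃ β : ℝ≥0, 0 < β ∧ β < 1 ∧ ∀ Q : Cube n, volume Q.set ≤ 1 →
    ∀ᵐ x ∂(volume.restrict Q.set), ∀ᵐ y ∂(volume.restrict Q.set),
      ∀ t : ℝ≥0∞, 1 ≤ t → t ≤ (volume Q.set)⁻¹ →
        (β : ℝ≥0∞) * phiInv φ x t ≤ phiInv φ y t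

/-- The condition `(A2)` (on all of `ℝⁿ`). -/
def A2 (φ : RSp n → ℝ≥0 → ℝ≥0∞) : Prop :=
  ∃ φi : ℝ≥0 → ℝ≥0∞, IsWeakPhi Set.univ (fun _ : RSp n => φi) ∧
  ∃ h : RSp n → ℝ≥0∞, (∫⁻ x, h x) < ∞ ∧ (∃ M : ℝ≥0, ∀ᵐ x ∂(volume : Measure (RSp n)), h x ≤ M) ∧
  ∃ β : ℝ≥0, 0 < β ∧ β ≤ 1 ∧ ∃ s : ℝ≥0, 0 < s ∧
    ∀ᵐ x ∂(volume : Measure (RSp n)), ∀ t : ℝ≥0,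
      (φi t ≤ (s : ℝ≥0∞) → φ x (β * t) ≤ φi t + h x) ∧
      (φ x t ≤ (s : ℝ≥0∞) → φi (β * t) ≤ φ x t + h x)

/-- Membership in the generalized Orlicz space `L^φ(Ω)`. -/
def MemOrlicz (φ : RSp n → ℝ≥0 → ℝ≥0∞) (Ω : Set (RSp n)) (f : RSp n → ℝ) : Prop :=
  AEMeasurable f (volume.restrict Ω) ∧
  ∃ lam : ℝ≥0, 0 < lam ∧ (∫⁻ x in Ω, φ x (lam * ‖f x‖₊) ∂volume) < ∞

/-- The Luxemburg (quasi)norm of `L^φ(Ω)`. -/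
def orliczNorm (φ : RSp n → ℝ≥0 → ℝ≥0∞) (Ω : Set (RSp n)) (f : RSp n → ℝ) : ℝ≥0∞ :=
  sInf ((fun lam : ℝ≥0 => (lam : ℝ≥0∞)) ''
    {lam : ℝ≥0 | 0 < lam ∧ (∫⁻ x in Ω, φ x (‖f x‖₊ / lam) ∂volume) ≤ 1})

/-- The canonical extension of `φ(x,·)` to `[0,∞]`. -/
def phiE (φ : RSp n → ℝ≥0 → ℝ≥0∞) (x : RSp n) (t : ℝ≥0∞) : ℝ≥0∞ :=
  ⨆ (s : ℝ≥0) (_ : (s : ℝ≥0∞) ≤ t), φ x s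

/-- The Luxemburg (quasi)norm for `[0,∞]`-valued functions. -/
def orliczNormE (φ : RSp n → ℝ≥0 → ℝ≥0∞) (Ω : Set (RSp n)) (g : RSp n → ℝ≥0∞) : ℝ≥0∞ :=
  sInf ((fun lam : ℝ≥0 => (lam : ℝ≥0∞)) ''
    {lam : ℝ≥0 | 0 < lam ∧ (∫⁻ x in Ω, phiE φ x (g x / (lam : ℝ≥0∞)) ∂volume) ≤ 1})

/-- The average `b_Q` of `b` over the cube `Q`. -/
def cubeAvg (Q : Cube n) (b : RSp n → ℝ) : ℝ := ⨍ x in Q.set, b x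

/-- The BMO seminorm `‖b‖_*`. -/
def bmoNorm (b : RSp n → ℝ) : ℝ≥0∞ :=
  ⨆ Q : Cube n, (volume Q.set)⁻¹ * ∫⁻ x in Q.set, ‖b x - cubeAvg Q b‖₊

/-- `b ∈ BMO(ℝⁿ)`. -/
def IsBMO (b : RSp n → ℝ) : Prop := LocallyIntegrable b volume ∧ bmoNorm b < ∞

/-- The non-centred Hardy–Littlewood maximal function (over axes-parallel cubes). -/
def maximal (f : RSp n → ℝ) (x : RSp n) : ℝ≥0∞ :=
  ⨆ (Q : Cube n) (_ : x ∈ Q.set), (volume Q.set)⁻¹ * ∫⁻ y in Q.set, (‖f y‖₊ : ℝ≥0∞) ∂volume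

/-- The fractional maximal function `M_α`. -/
def fracMaximal (α : ℝ) (f : RSp n → ℝ) (x : RSp n) : ℝ≥0∞ :=
  ⨆ (Q : Cube n) (_ : x ∈ Q.set),
    volume Q.set ^ (α / (n : ℝ) - 1) * ∫⁻ y in Q.set, (‖f y‖₊ : ℝ≥0∞) ∂volume

/-- The maximal function restricted to subcubes of `Q₀`. -/
def restMaximal (Q₀ : Cube n) (f : RSp n → ℝ) (x : RSp n) : ℝ≥0∞ :=
  ⨆ (Q : Cube n) (_ : x ∈ Q.set) (_ : Q.set ⊆ Q₀.set),
    (volume Q.set)⁻¹ * ∫⁻ y in Q.set, (‖f y‖₊ : ℝ≥0∞) ∂volume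

/-- The fractional maximal function restricted to subcubes of `Q₀`. -/
def restFracMaximal (α : ℝ) (Q₀ : Cube n) (f : RSp n → ℝ) (x : RSp n) : ℝ≥0∞ :=
  ⨆ (Q : Cube n) (_ : x ∈ Q.set) (_ : Q.set ⊆ Q₀.set),
    volume Q.set ^ (α / (n : ℝ) - 1) * ∫⁻ y in Q.set, (‖f y‖₊ : ℝ≥0∞) ∂volume

/-- The sharp maximal function `M♯`. -/
def sharpMaximal (f : RSp n → ℝ) (x : RSp n) : ℝ≥0∞ :=
  ⨆ (Q : Cube n) (_ : x ∈ Q.set),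
    (volume Q.set)⁻¹ * ∫⁻ y in Q.set, (‖f y - ⨍ z in Q.set, f z‖₊ : ℝ≥0∞) ∂volume

/-- The maximal commutator `M_b`. -/
def maximalComm (b f : RSp n → ℝ) (x : RSp n) : ℝ≥0∞ :=
  ⨆ (Q : Cube n) (_ : x ∈ Q.set),
    (volume Q.set)⁻¹ * ∫⁻ y in Q.set, (‖b x - b y‖₊ : ℝ≥0∞) * (‖f y‖₊ : ℝ≥0∞) ∂volume

/-- The fractional maximal commutator `M_{b,α}`. -/
def fracMaximalComm (α : ℝ) (b f : RSp n → ℝ) (x : RSp n) : ℝ≥0∞ :=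
  ⨆ (Q : Cube n) (_ : x ∈ Q.set),
    volume Q.set ^ (α / (n : ℝ) - 1) *
      ∫⁻ y in Q.set, (‖b x - b y‖₊ : ℝ≥0∞) * (‖f y‖₊ : ℝ≥0∞) ∂volume

/-- The commutator `[M,b]f = M(bf) − b·Mf` of the maximal operator. -/
def maximalCommutator (b f : RSp n → ℝ) (x : RSp n) : ℝ :=
  (maximal (fun y => b y * f y) x).toReal - b x * (maximal f x).toReal

/-- The commutator `[M_α,b]f = M_α(bf) − b·M_α f` of the fractional maximal operator. -/
def fracMaximalCommutator (α : ℝ) (b f : RSp n → ℝ) (x : RSp n) : ℝ :=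
  (fracMaximal α (fun y => b y * f y) x).toReal - b x * (fracMaximal α f x).toReal

/-- The Riesz potential `I_α f`. -/
def riesz (α : ℝ) (f : RSp n → ℝ) (x : RSp n) : ℝ :=
  ∫ y, f y / dist x y ^ ((n : ℝ) - α)

/-- The commutator `[I_α, b]f = I_α(bf) − b·I_α f` of the Riesz potential. -/
def rieszCommutator (α : ℝ) (b f : RSp n → ℝ) (x : RSp n) : ℝ :=
  riesz α (fun y => b y * f y) x - b x * riesz α f x

/-- The operator `I_{b,α} f(x) = ∫ |b(x)−b(y)|·|x−y|^{α−n} f(y) dy`. -/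
def rieszAbs (α : ℝ) (b f : RSp n → ℝ) (x : RSp n) : ℝ :=
  ∫ y, |b x - b y| / dist x y ^ ((n : ℝ) - α) * f y

/-- Equivalence `φ ≃ ψ` of Φ-functions. -/
def PhiEquiv (φ ψ : RSp n → ℝ≥0 → ℝ≥0∞) : Prop :=
  ∃ L : ℝ≥0, 1 ≤ L ∧ ∀ x : RSp n, ∀ t : ℝ≥0, ψ x (t / L) ≤ φ x t ∧ φ x t ≤ ψ x (L * t)

/-- Weak equivalence `φ ∼ ψ` of Φ-functions. -/
def PhiWeakEquiv (φ ψ : RSp n → ℝ≥0 → ℝ≥0∞) : Prop :=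
  ∃ L : ℝ≥0, 1 ≤ L ∧ ∃ h : RSp n → ℝ≥0∞, (∫⁻ x, h x) < ∞ ∧
    ∀ᵐ x ∂(volume : Measure (RSp n)), ∀ t : ℝ≥0,
      ψ x t ≤ φ x (L * t) + h x ∧ φ x t ≤ ψ x (L * t) + h x

/-- The relation `φ⁻¹(x,t) ≈ t^{α/n}·ψ⁻¹(x,t)` with constants independent of `x` and `t > 0`. -/
def FracInvRel (α : ℝ) (φ ψ : RSp n → ℝ≥0 → ℝ≥0∞) : Prop :=
  ∃ c₁ c₂ : ℝ≥0, 0 < c₁ ∧ ∀ x : RSp n, ∀ t : ℝ≥0, 0 < t →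
    (c₁ : ℝ≥0∞) * ((t : ℝ≥0∞) ^ (α / (n : ℝ)) * phiInv ψ x t) ≤ phiInv φ x t ∧
    phiInv φ x t ≤ (c₂ : ℝ≥0∞) * ((t : ℝ≥0∞) ^ (α / (n : ℝ)) * phiInv ψ x t)

/-- The characteristic function of a cube, as a real-valued function. -/
def cubeIndicator (Q : Cube n) : RSp n → ℝ := Q.set.indicator 1

end

open MeasureTheory NNReal ENNReal Filter Set

lemma Cube.set_eq {n : ℕ} (Q : Cube n) :
    Q.set = (WithLp.ofLp : RSp n → (Fin n → ℝ)) ⁻¹' Metric.closedBall (WithLp.ofLp Q.c) Q.r := by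
  ext y
  simp only [Cube.set, mem_setOf_eq, mem_preimage, Metric.mem_closedBall]
  rw [dist_pi_le_iff Q.r_pos.le]
  simp [Real.dist_eq]

lemma Cube.measurableSet {n : ℕ} (Q : Cube n) : MeasurableSet Q.set := by
  rw [Q.set_eq]
  exact (PiLp.volume_preserving_ofLp (Fin n)).measurable Metric.isClosed_closedBall.measurableSet

lemma Cube.isCompact {n : ℕ} (Q : Cube n) : IsCompact Q.set := by
  rw [Q.set_eq]
  have := (isCompact_closedBall (WithLp.ofLp Q.c : Fin n → ℝ) Q.r).image
    (PiLp.continuous_toLp 2 (fun _ : Fin n => ℝ))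
  convert this using 1
  ext y
  simp only [mem_preimage, mem_image]
  constructor
  · intro h
    exact ⟨WithLp.ofLp y, h, rfl⟩
  · rintro ⟨z, hz, rfl⟩
    exact hz

lemma Cube.volume_eq {n : ℕ} (Q : Cube n) : volume Q.set = ENNReal.ofReal ((2 * Q.r) ^ n) := by
  rw [Q.set_eq, (PiLp.volume_preserving_ofLp (Fin n)).measure_preimage
    Metric.isClosed_closedBall.measurableSet.nullMeasurableSet,
    Real.volume_pi_closedBall _ Q.r_pos.le]
  simp

lemma Cube.volume_pos {n : ℕ} (Q : Cube n) : 0 < volume Q.set := by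
  rw [Q.volume_eq, ENNReal.ofReal_pos]
  have := Q.r_pos
  positivity

lemma Cube.volume_ne_zero {n : ℕ} (Q : Cube n) : volume Q.set ≠ 0 := Q.volume_pos.ne'

lemma Cube.volume_ne_top {n : ℕ} (Q : Cube n) : volume Q.set ≠ ∞ := by
  rw [Q.volume_eq]; exact ENNReal.ofReal_ne_top

lemma Cube.center_mem {n : ℕ} (Q : Cube n) : Q.c ∈ Q.set := by
  intro i; simpa using Q.r_pos.le

/-- dilation of a cube -/
def Cube.dil {n : ℕ} (k : ℝ) (hk : 0 < k) (Q : Cube n) : Cube n := ⟨Q.c, k * Q.r, mul_pos hk Q.r_pos⟩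

lemma Cube.volume_dil {n : ℕ} (k : ℝ) (hk : 0 < k) (Q : Cube n) :
    volume (Q.dil k hk).set = ENNReal.ofReal (k ^ n) * volume Q.set := by
  rw [Cube.volume_eq, Cube.volume_eq, ← ENNReal.ofReal_mul (by positivity)]
  congr 1
  simp only [Cube.dil]
  rw [← mul_pow]; ring_nf

lemma Cube.subset_of {n : ℕ} {Q Q' : Cube n} {k : ℝ} (hk : 0 < k)
    (h : (Q.set ∩ Q'.set).Nonempty) (hr : 2 * Q.r + Q'.r ≤ k * Q'.r) :
    Q.set ⊆ (Q'.dil k hk).set := by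
  obtain ⟨z, hz, hz'⟩ := h
  intro y hy i
  have h1 := abs_le.1 (hz i)
  have h2 := abs_le.1 (hz' i)
  have h3 := abs_le.1 (hy i)
  simp only [Cube.dil]
  rw [abs_le]
  constructor <;> linarith [h1.1, h1.2, h2.1, h2.2, h3.1, h3.2]

lemma Cube.subset_dil {n : ℕ} (Q : Cube n) {k : ℝ} (hk : 0 < k) (h1 : 1 ≤ k) :
    Q.set ⊆ (Q.dil k hk).set := by
  intro y hy i
  have := hy i
  simp only [Cube.dil]
  nlinarith [Q.r_pos]

lemma Cube.dil_mono {n : ℕ} (Q : Cube n) {k l : ℝ} (hk : 0 < k) (hl : 0 < l) (h1 : k ≤ l) :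
    (Q.dil k hk).set ⊆ (Q.dil l hl).set := by
  intro y hy i
  have := hy i
  simp only [Cube.dil] at this ⊢
  nlinarith [Q.r_pos]

lemma locInt_cube {n : ℕ} {b : RSp n → ℝ} (hb : LocallyIntegrable b volume) (Q : Cube n) :
    IntegrableOn b Q.set volume := hb.integrableOn_isCompact Q.isCompact

/-- Mean oscillation bound as lintegral -/
lemma bmo_cube {n : ℕ} {b : RSp n → ℝ} (h1 : bmoNorm b ≤ 1) (Q : Cube n) :
    ∫⁻ x in Q.set, ‖b x - cubeAvg Q b‖₊ ≤ volume Q.set := by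
  have h : (volume Q.set)⁻¹ * ∫⁻ x in Q.set, ‖b x - cubeAvg Q b‖₊ ≤ 1 :=
    le_trans (le_iSup (fun Q : Cube n =>
      (volume Q.set)⁻¹ * ∫⁻ x in Q.set, (‖b x - cubeAvg Q b‖₊ : ℝ≥0∞)) Q) h1
  rw [mul_comm, ← div_eq_mul_inv, ENNReal.div_le_iff Q.volume_ne_zero Q.volume_ne_top, one_mul] at h
  exact h

lemma cubeAvg_sub_le {n : ℕ} {b : RSp n → ℝ} (hb : LocallyIntegrable b volume) (Q : Cube n) (c : ℝ) :
    ENNReal.ofReal |cubeAvg Q b - c| * volume Q.set ≤ ∫⁻ x in Q.set, ‖b x - c‖₊ := by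
  have hi := locInt_cube hb Q
  haveI : Fact (volume Q.set < ∞) := ⟨Q.volume_ne_top.lt_top⟩
  have hc : IntegrableOn (fun _ : RSp n => c) Q.set volume := integrableOn_const Q.volume_ne_top
  have e : (volume.real Q.set) * (cubeAvg Q b - c) = ∫ x in Q.set, (b x - c) := by
    rw [integral_sub hi hc, cubeAvg, setAverage_eq]
    have : volume.real Q.set ≠ 0 := by
      rw [Measure.real, ENNReal.toReal_ne_zero]; exact ⟨Q.volume_ne_zero, Q.volume_ne_top⟩
    simp only [smul_eq_mul, setIntegral_const]
    field_simp
  have h2 : ENNReal.ofReal |cubeAvg Q b - c| * volume Q.set = ‖∫ x in Q.set, (b x - c)‖ₑ := by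
    rw [← e, enorm_mul, ← ofReal_norm_eq_enorm (cubeAvg Q b - c), Real.norm_eq_abs, mul_comm]
    congr 1
    rw [← ofReal_norm_eq_enorm, Real.norm_of_nonneg measureReal_nonneg, ofReal_measureReal Q.volume_ne_top]
  rw [h2]
  exact enorm_integral_le_lintegral_enorm _

lemma cubeAvg_sub_le_of_subset {n : ℕ} {b : RSp n → ℝ} (hb : LocallyIntegrable b volume)
    (h1 : bmoNorm b ≤ 1) {Q Q' : Cube n} (h : Q.set ⊆ Q'.set) {C : ℝ≥0∞}
    (hC : volume Q'.set ≤ C * volume Q.set) :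
    ENNReal.ofReal |cubeAvg Q b - cubeAvg Q' b| ≤ C := by
  have := (cubeAvg_sub_le hb Q (cubeAvg Q' b)).trans
    ((lintegral_mono_set h).trans ((bmo_cube h1 Q').trans hC))
  exact (ENNReal.mul_le_mul_iff_left Q.volume_ne_zero Q.volume_ne_top).1 this

/-- Lebesgue differentiation along cubes. -/
lemma ae_tendsto_cubeAvg {n : ℕ} {b : RSp n → ℝ} (hb : LocallyIntegrable b volume) :
    ∀ᵐ x ∂(volume : Measure (RSp n)), ∀ ε > 0, ∀ R > 0, ∃ Q : Cube n, Q.c = x ∧ Q.r ≤ R ∧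
      |cubeAvg Q b - b x| < ε := by
  have mp := PiLp.volume_preserving_toLp (Fin n)
  have mq := PiLp.volume_preserving_ofLp (Fin n)
  have emb : MeasurableEmbedding (WithLp.toLp 2 : (Fin n → ℝ) → RSp n) :=
    (MeasurableEquiv.toLp 2 (Fin n → ℝ)).measurableEmbedding
  let b' : (Fin n → ℝ) → ℝ := fun z => b (WithLp.toLp 2 z)
  have hb' : LocallyIntegrable b' volume := by
    rw [locallyIntegrable_iff]
    intro k hk
    have hk' : IsCompact ((WithLp.toLp 2 : (Fin n → ℝ) → RSp n) '' k) :=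
      hk.image (PiLp.continuous_toLp 2 (fun _ : Fin n => ℝ))
    exact (mp.integrableOn_image emb).1 (hb.integrableOn_isCompact hk')
  have := IsUnifLocDoublingMeasure.ae_tendsto_average volume hb' 1
  have h2 := mq.quasiMeasurePreserving.ae this
  filter_upwards [h2] with x hx
  intro ε hε R hR
  have h3 := hx (l := nhdsWithin (0 : ℝ) (Ioi 0)) (fun _ => WithLp.ofLp x) (fun r => r) tendsto_id
    (by filter_upwards [self_mem_nhdsWithin] with r hr
        simp only [one_mul]; exact Metric.mem_closedBall_self (le_of_lt hr))
  have h4 := (Metric.tendsto_nhds.1 h3 ε hε)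
  have h5 : ∀ᶠ r in nhdsWithin (0 : ℝ) (Ioi 0), r ∈ Ioc 0 R := Ioc_mem_nhdsGT hR
  obtain ⟨r, hr, hr2⟩ := (h4.and h5).exists
  refine ⟨⟨x, r, hr2.1⟩, rfl, hr2.2, ?_⟩
  rw [Real.dist_eq] at hr
  have e : cubeAvg ⟨x, r, hr2.1⟩ b = ⨍ y in Metric.closedBall (WithLp.ofLp x) r, b' y := by
    unfold cubeAvg
    rw [setAverage_eq, setAverage_eq, Cube.set_eq]
    have hpre : (WithLp.toLp 2 : (Fin n → ℝ) → RSp n) ⁻¹' ((WithLp.ofLp : RSp n → (Fin n → ℝ)) ⁻¹'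
        Metric.closedBall (WithLp.ofLp x) r) = Metric.closedBall (WithLp.ofLp x) r := rfl
    have hm : MeasurableSet ((WithLp.ofLp : RSp n → (Fin n → ℝ)) ⁻¹'
        Metric.closedBall (WithLp.ofLp x) r) := mq.measurable Metric.isClosed_closedBall.measurableSet
    congr 1
    · rw [Measure.real, Measure.real, mq.measure_preimage
        Metric.isClosed_closedBall.measurableSet.nullMeasurableSet]
    · rw [← mp.setIntegral_preimage_emb emb]
      rfl
  rw [e]; exact hr

open MeasureTheory NNReal ENNReal Filter Set

lemma five_pos : (0:ℝ) < 5 := by norm_num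

lemma cube_vitali {n : ℕ} (t : Set (Cube n)) (R : ℝ) (hR : ∀ Q ∈ t, Q.r ≤ R) :
    ∃ u ⊆ t, u.Countable ∧ u.PairwiseDisjoint Cube.set ∧
      ∀ Q ∈ t, ∃ Q' ∈ u, Q.set ⊆ (Q'.dil 5 five_pos).set ∧ Q.r ≤ 2 * Q'.r := by
  obtain ⟨u, hut, hd, hc⟩ := Vitali.exists_disjoint_subfamily_covering_enlargement
    (Cube.set : Cube n → Set (RSp n)) t (fun Q => Q.r) 2 (by norm_num) (fun Q _ => Q.r_pos.le) R hR
    (fun Q _ => ⟨Q.c, Q.center_mem⟩)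
  refine ⟨u, hut, ?_, hd, ?_⟩
  · have := Measure.countable_meas_pos_of_disjoint_iUnion (μ := (volume : Measure (RSp n)))
      (As := fun Q : u => Q.1.set) (fun Q => Q.1.measurableSet)
      (fun a b hab => hd a.2 b.2 (fun h => hab (Subtype.ext h)))
    have h2 : {i : u | 0 < (volume : Measure (RSp n)) i.1.set} = Set.univ := by
      ext i; simp [i.1.volume_pos]
    rw [h2] at this
    exact Set.countable_coe_iff.1 (Set.countable_univ_iff.1 this)
  · intro Q hQ
    obtain ⟨Q', hQ', h1, h2⟩ := hc Q hQ
    exact ⟨Q', hQ', Cube.subset_of five_pos h1 (by linarith), h2⟩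

def JNset {n : ℕ} (b : RSp n → ℝ) (Q₀ : Cube n) (l : ℝ) : Set (RSp n) :=
  {x | x ∈ Q₀.set ∧ ∃ Q : Cube n, x ∈ Q.set ∧ Q.r ≤ Q₀.r ∧ l < |cubeAvg Q b - cubeAvg Q₀ b|}

lemma bmo_dil3 {n : ℕ} {b : RSp n → ℝ} (hb : LocallyIntegrable b volume)
    (h1 : bmoNorm b ≤ 1) (Q : Cube n) :
    ∫⁻ x in (Q.dil 3 (by norm_num)).set, ‖b x - cubeAvg Q b‖₊ ≤
      ENNReal.ofReal (2 * 9 ^ n) * volume Q.set := by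
  set Q' := Q.dil 3 (by norm_num) with hQ'
  have hv : volume Q'.set = ENNReal.ofReal (3 ^ n) * volume Q.set := Cube.volume_dil _ _ _
  have hs : ENNReal.ofReal |cubeAvg Q b - cubeAvg Q' b| ≤ ENNReal.ofReal (3 ^ n) :=
    cubeAvg_sub_le_of_subset hb h1 (Q.subset_dil _ (by norm_num)) hv.le
  have hpt : ∀ x, (‖b x - cubeAvg Q b‖₊ : ℝ≥0∞) ≤ ‖b x - cubeAvg Q' b‖₊ + ENNReal.ofReal (3 ^ n) := by
    intro x
    have : (‖b x - cubeAvg Q b‖₊ : ℝ≥0∞) ≤ ‖b x - cubeAvg Q' b‖₊ + ‖cubeAvg Q' b - cubeAvg Q b‖₊ := by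
      have h := nnnorm_add_le (b x - cubeAvg Q' b) (cubeAvg Q' b - cubeAvg Q b)
      rw [sub_add_sub_cancel] at h
      exact_mod_cast h
    refine this.trans (add_le_add le_rfl (le_trans (le_of_eq ?_) hs))
    rw [← enorm_eq_nnnorm, ← ofReal_norm, Real.norm_eq_abs, abs_sub_comm]
  calc ∫⁻ x in Q'.set, ‖b x - cubeAvg Q b‖₊
      ≤ ∫⁻ x in Q'.set, ((‖b x - cubeAvg Q' b‖₊ : ℝ≥0∞) + ENNReal.ofReal (3 ^ n)) :=
        lintegral_mono hpt
    _ = (∫⁻ x in Q'.set, (‖b x - cubeAvg Q' b‖₊ : ℝ≥0∞)) + ENNReal.ofReal (3 ^ n) * volume Q'.set := by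
        rw [lintegral_add_right _ measurable_const]; simp
    _ ≤ volume Q'.set + ENNReal.ofReal (3 ^ n) * volume Q'.set := by
        gcongr; exact bmo_cube h1 Q'
    _ = ENNReal.ofReal (3 ^ n + 3 ^ n * 3 ^ n) * volume Q.set := by
        rw [hv, ENNReal.ofReal_add (by positivity) (by positivity),
          ENNReal.ofReal_mul (by positivity)]; ring
    _ ≤ _ := by
        gcongr
        have e : (3:ℝ) ^ n * 3 ^ n = 9 ^ n := by rw [← mul_pow]; norm_num
        have : (3:ℝ) ^ n ≤ 9 ^ n := pow_le_pow_left₀ (by norm_num) (by norm_num) n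
        rw [e]; linarith

lemma JN_step {n : ℕ} {b : RSp n → ℝ} (hb : LocallyIntegrable b volume)
    (h1 : bmoNorm b ≤ 1) (l : ℝ) (hl : 0 ≤ l) (A : ℝ≥0∞)
    (hA : ∀ Q₀ : Cube n, volume (JNset b Q₀ l) ≤ A * volume Q₀.set) (Q₀ : Cube n) :
    volume (JNset b Q₀ (l + 4 * 45 ^ n)) ≤ A * 2⁻¹ * volume Q₀.set := by
  set K : ℝ := 4 * 45 ^ n with hK
  have hKpos : 0 < K := by positivity
  let adm : RSp n → Cube n → Prop := fun x Q =>
    x ∈ Q.set ∧ Q.r ≤ Q₀.r ∧ K < |cubeAvg Q b - cubeAvg Q₀ b|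
  let t : Set (Cube n) := {Q | ∃ x ∈ Q₀.set, adm x Q ∧ ∀ Q', adm x Q' → Q'.r ≤ 2 * Q.r}
  have hchoose : ∀ x ∈ Q₀.set, (∃ Q, adm x Q) → ∃ Q, adm x Q ∧ ∀ Q', adm x Q' → Q'.r ≤ 2 * Q.r := by
    intro x hx ⟨Q, hQ⟩
    let S : Set ℝ := {ρ | ∃ Q, adm x Q ∧ Q.r = ρ}
    have hbd : BddAbove S := ⟨Q₀.r, by rintro _ ⟨Q, hQ, rfl⟩; exact hQ.2.1⟩
    have hne : S.Nonempty := ⟨_, Q, hQ, rfl⟩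
    have hpos : 0 < sSup S := lt_of_lt_of_le Q.r_pos (le_csSup hbd ⟨Q, hQ, rfl⟩)
    obtain ⟨_, ⟨Q1, hQ1, rfl⟩, hlt⟩ := exists_lt_of_lt_csSup hne (half_lt_self hpos)
    refine ⟨Q1, hQ1, fun Q' hQ' => ?_⟩
    have := le_csSup hbd ⟨Q', hQ', rfl⟩
    linarith
  obtain ⟨u, hut, huc, hud, hcov⟩ := cube_vitali t Q₀.r
    (by rintro Q ⟨x, -, hQ, -⟩; exact hQ.2.1)
  have hsub : JNset b Q₀ (l + K) ⊆ ⋃ Q ∈ u, JNset b (Q.dil 5 five_pos) l := by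
    rintro x ⟨hx0, Q, hxQ, hQr, hQ⟩
    have hadmQ : adm x Q := ⟨hxQ, hQr, by linarith⟩
    obtain ⟨Qx, hQx, hmax⟩ := hchoose x hx0 ⟨Q, hadmQ⟩
    obtain ⟨Qj, hQj, hsub, hr⟩ := hcov Qx ⟨x, hx0, hQx, hmax⟩
    have hx' : x ∈ (Qj.dil 5 five_pos).set := hsub hQx.1
    have hQr4 := hmax Q hadmQ
    have hjr := Qj.r_pos
    refine mem_biUnion hQj ⟨hx', Q, hxQ, ?_, ?_⟩
    · simp only [Cube.dil]; linarith
    · have hcl : |cubeAvg (Qj.dil 5 five_pos) b - cubeAvg Q₀ b| ≤ K := by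
        by_contra hcon
        push Not at hcon
        by_cases h5 : (Qj.dil 5 five_pos).r ≤ Q₀.r
        · have := hmax _ ⟨hx', h5, hcon⟩
          simp only [Cube.dil] at this
          linarith
        · obtain ⟨xj, hxj, hadj, -⟩ := hut hQj
          have hjr0 := hadj.2.1
          simp only [Cube.dil] at h5
          have s1 : (Qj.dil 5 five_pos).set ⊆ (Q₀.dil 11 (by norm_num)).set :=
            Cube.subset_of _ ⟨x, hx', hx0⟩ (by simp only [Cube.dil]; linarith)
          have s2 : Q₀.set ⊆ (Q₀.dil 11 (by norm_num)).set := Q₀.subset_dil _ (by norm_num)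
          have hv : volume (Q₀.dil 11 (by norm_num)).set = ENNReal.ofReal (11 ^ n) * volume Q₀.set :=
            Cube.volume_dil _ _ _
          have hv2 : volume Q₀.set ≤ volume (Qj.dil 5 five_pos).set := by
            rw [Cube.volume_eq, Cube.volume_eq]
            apply ENNReal.ofReal_le_ofReal
            have := Q₀.r_pos
            apply pow_le_pow_left₀ (by positivity)
            simp only [Cube.dil]; linarith
          have e1 := cubeAvg_sub_le_of_subset hb h1 s1 (C := ENNReal.ofReal (11 ^ n))
            (by rw [hv]; gcongr)
          have e2 := cubeAvg_sub_le_of_subset hb h1 s2 hv.le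
          rw [ENNReal.ofReal_le_ofReal_iff (by positivity)] at e1 e2
          have h3 : (11:ℝ) ^ n ≤ 45 ^ n := pow_le_pow_left₀ (by norm_num) (by norm_num) n
          have h45 : (0:ℝ) < 45 ^ n := by positivity
          have := abs_sub_le (cubeAvg (Qj.dil 5 five_pos) b) (cubeAvg (Q₀.dil 11 (by norm_num)) b)
            (cubeAvg Q₀ b)
          rw [abs_sub_comm (cubeAvg (Q₀.dil 11 (by norm_num)) b)] at this
          linarith
      have := abs_sub_le (cubeAvg Q b) (cubeAvg (Qj.dil 5 five_pos) b) (cubeAvg Q₀ b)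
      linarith
  have hsum : ENNReal.ofReal K * ∑' Q : u, volume Q.1.set ≤ ENNReal.ofReal (2 * 9 ^ n) * volume Q₀.set := by
    rw [← ENNReal.tsum_mul_left]
    calc ∑' Q : u, ENNReal.ofReal K * volume Q.1.set
        ≤ ∑' Q : u, ∫⁻ x in Q.1.set, ‖b x - cubeAvg Q₀ b‖₊ := by
          refine ENNReal.tsum_le_tsum fun Q => ?_
          obtain ⟨x, -, hQ, -⟩ := hut Q.2
          refine le_trans ?_ (cubeAvg_sub_le hb Q.1 (cubeAvg Q₀ b))
          gcongr
          exact hQ.2.2.le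
      _ = ∫⁻ x in ⋃ Q ∈ u, Q.set, ‖b x - cubeAvg Q₀ b‖₊ :=
          (lintegral_biUnion huc (fun Q _ => Q.measurableSet) hud _).symm
      _ ≤ ∫⁻ x in (Q₀.dil 3 (by norm_num)).set, ‖b x - cubeAvg Q₀ b‖₊ := by
          apply lintegral_mono_set
          refine iUnion₂_subset fun Q hQ => ?_
          obtain ⟨x, hx, hQ, -⟩ := hut hQ
          exact Cube.subset_of _ ⟨x, hQ.1, hx⟩ (by linarith [hQ.2.1])
      _ ≤ _ := bmo_dil3 hb h1 Q₀
  have hsum2 : ENNReal.ofReal (5 ^ n) * ∑' Q : u, volume Q.1.set ≤ 2⁻¹ * volume Q₀.set := by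
    have e1 : ENNReal.ofReal K = ENNReal.ofReal (4 * 9 ^ n) * ENNReal.ofReal (5 ^ n) := by
      rw [← ENNReal.ofReal_mul (by positivity), mul_assoc, ← mul_pow, hK]; norm_num
    have e2 : ENNReal.ofReal (2 * 9 ^ n) = ENNReal.ofReal (4 * 9 ^ n) * 2⁻¹ := by
      have : (2⁻¹ : ℝ≥0∞) = ENNReal.ofReal 2⁻¹ := by
        rw [ENNReal.ofReal_inv_of_pos (by norm_num)]; simp
      rw [this, ← ENNReal.ofReal_mul (by positivity)]
      congr 1; ring
    rw [e1, e2, mul_assoc, mul_assoc] at hsum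
    refine (ENNReal.mul_le_mul_iff_right ?_ ENNReal.ofReal_ne_top).1 hsum
    have : (0:ℝ) < 4 * 9 ^ n := by positivity
    simpa using this
  calc volume (JNset b Q₀ (l + K)) ≤ volume (⋃ Q ∈ u, JNset b (Q.dil 5 five_pos) l) := measure_mono hsub
    _ ≤ ∑' Q : u, volume (JNset b (Q.1.dil 5 five_pos) l) := measure_biUnion_le _ huc _
    _ ≤ ∑' Q : u, A * (ENNReal.ofReal (5 ^ n) * volume Q.1.set) := by
        refine ENNReal.tsum_le_tsum fun Q => ?_
        rw [← Cube.volume_dil 5 five_pos]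
        exact hA _
    _ = A * (ENNReal.ofReal (5 ^ n) * ∑' Q : u, volume Q.1.set) := by
        rw [ENNReal.tsum_mul_left, ENNReal.tsum_mul_left]
    _ ≤ A * (2⁻¹ * volume Q₀.set) := by gcongr
    _ = _ := by ring

lemma JN_decay {n : ℕ} {b : RSp n → ℝ} (hb : LocallyIntegrable b volume)
    (h1 : bmoNorm b ≤ 1) (i : ℕ) (Q₀ : Cube n) :
    volume (JNset b Q₀ (i * (4 * 45 ^ n))) ≤ 2⁻¹ ^ i * volume Q₀.set := by
  induction i generalizing Q₀ with
  | zero =>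
    rw [pow_zero, one_mul]
    exact measure_mono (fun x hx => hx.1)
  | succ i ih =>
    have := JN_step hb h1 (i * (4 * 45 ^ n)) (by positivity) (2⁻¹ ^ i) (fun Q => ih Q) Q₀
    rw [pow_succ]
    convert this using 3
    push_cast; ring

/-- Measurable majorant of the local oscillation function, with all moments. -/
lemma JN_majorant (n : ℕ) (m : ℝ) (hm : 0 ≤ m) : ∃ C : ℝ≥0, ∀ b : RSp n → ℝ,
    LocallyIntegrable b volume → bmoNorm b ≤ 1 → ∀ Q₀ : Cube n, ∃ W : RSp n → ℝ≥0∞, Measurable W ∧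
      (∀ x ∈ Q₀.set, ∀ Q : Cube n, x ∈ Q.set → Q.r ≤ Q₀.r →
        ENNReal.ofReal ((1 + |cubeAvg Q b - cubeAvg Q₀ b|) ^ m) ≤ W x) ∧
      ∫⁻ x in Q₀.set, W x ≤ C * volume Q₀.set := by
  set K : ℝ := 4 * 45 ^ n with hK
  have hKpos : 0 < K := by positivity
  let c : ℕ → ℝ := fun i => (1 + (i + 1) * K) ^ m
  have hc : ∀ i, 0 ≤ c i := fun i => by positivity
  have hsummable : Summable fun i : ℕ => c i * (1/2) ^ i := by
    obtain ⟨N, hN⟩ := exists_nat_ge m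
    have h1 : Summable fun i : ℕ => ((i:ℝ) ^ N * (1/2:ℝ) ^ i) :=
      summable_pow_mul_geometric_of_norm_lt_one N (by norm_num)
    have h2 : Summable fun i : ℕ => (((i+1 : ℕ):ℝ) ^ N * (1/2:ℝ) ^ (i+1)) :=
      (_root_.summable_nat_add_iff 1).2 h1
    refine Summable.of_nonneg_of_le (fun i => by have := hc i; positivity) (fun i => ?_)
      (h2.mul_left (2 * (1 + K) ^ N))
    have hle : c i ≤ (1 + K) ^ N * ((i+1:ℕ):ℝ) ^ N := by
      rw [← mul_pow]
      have hb1 : (1 + (i + 1) * K) ≤ (1 + K) * ((i+1:ℕ):ℝ) := by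
        push_cast
        have : (0:ℝ) ≤ i := Nat.cast_nonneg i
        nlinarith
      have h11 : (1:ℝ) ≤ 1 + (i + 1) * K := by
        have : (0:ℝ) ≤ (i + 1) * K := by positivity
        linarith
      calc c i ≤ (1 + (i + 1) * K) ^ (N:ℝ) := Real.rpow_le_rpow_of_exponent_le h11 hN
        _ = (1 + (i + 1) * K) ^ N := Real.rpow_natCast _ _
        _ ≤ _ := pow_le_pow_left₀ (by linarith) hb1 N
    calc c i * (1/2) ^ i ≤ (1 + K) ^ N * ((i+1:ℕ):ℝ) ^ N * (1/2)^i := by gcongr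
      _ = _ := by rw [pow_succ (1/2:ℝ) i]; ring
  set Cs := ∑' i : ℕ, c i * (1/2) ^ i with hCs
  have hCs0 : 0 ≤ Cs := tsum_nonneg fun i => by have := hc i; positivity
  have hc0 : 0 ≤ c 0 := hc 0
  have hCE : ∑' i : ℕ, ENNReal.ofReal (c i) * 2⁻¹ ^ i = ENNReal.ofReal Cs := by
    rw [hCs, ENNReal.ofReal_tsum_of_nonneg (fun i => by have := hc i; positivity) hsummable]
    congr 1; ext i
    rw [ENNReal.ofReal_mul (hc i), ENNReal.ofReal_pow (by norm_num)]
    congr 2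
    rw [one_div, ENNReal.ofReal_inv_of_pos (by norm_num)]; simp
  refine ⟨(c 0).toNNReal + Cs.toNNReal, fun b hb h1 Q₀ => ?_⟩
  let Fs : ℕ → Set (RSp n) := fun i => toMeasurable volume (JNset b Q₀ (i * K))
  refine ⟨fun x => ENNReal.ofReal (c 0) + ∑' i : ℕ, (Fs i).indicator (fun _ => ENNReal.ofReal (c i)) x, ?_, ?_, ?_⟩
  · refine Measurable.add (measurable_const) (Measurable.ennreal_tsum fun i => ?_)
    exact measurable_const.indicator (measurableSet_toMeasurable _ _)
  · intro x hx Q hxQ hr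
    set d := |cubeAvg Q b - cubeAvg Q₀ b| with hd
    have hd0 : 0 ≤ d := abs_nonneg _
    by_cases hdK : d ≤ K
    · refine le_trans (ENNReal.ofReal_le_ofReal ?_) le_self_add
      apply Real.rpow_le_rpow (by positivity) _ hm
      simp; exact hdK
    · push Not at hdK
      -- i with i K < d ≤ (i+1) K
      obtain ⟨i, hi1, hi2⟩ : ∃ i : ℕ, (i:ℝ) * K < d ∧ d ≤ (i + 1) * K := by
        have hpos : 0 < d / K := div_pos (hKpos.trans hdK) hKpos
        have hce : 0 < ⌈d / K⌉₊ := Nat.ceil_pos.2 hpos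
        refine ⟨⌈d / K⌉₊ - 1, ?_, ?_⟩
        · have := Nat.ceil_lt_add_one hpos.le
          rw [Nat.cast_sub hce, Nat.cast_one, ← lt_div_iff₀ hKpos]; linarith
        · have := Nat.le_ceil (d / K)
          rw [Nat.cast_sub hce, Nat.cast_one, ← div_le_iff₀ hKpos]; linarith
      refine le_trans ?_ (le_trans (ENNReal.le_tsum i) le_add_self)
      have hmem : x ∈ Fs i := subset_toMeasurable _ _ ⟨hx, Q, hxQ, hr, hi1⟩
      rw [indicator_of_mem hmem]
      apply ENNReal.ofReal_le_ofReal
      apply Real.rpow_le_rpow (by positivity) _ hm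
      linarith
  · rw [lintegral_add_left measurable_const, lintegral_tsum]
    · have hterm : ∀ i, ∫⁻ x in Q₀.set, (Fs i).indicator (fun _ => ENNReal.ofReal (c i)) x ≤
          ENNReal.ofReal (c i) * 2⁻¹ ^ i * volume Q₀.set := by
        intro i
        calc ∫⁻ x in Q₀.set, (Fs i).indicator (fun _ => ENNReal.ofReal (c i)) x
            ≤ ∫⁻ x, (Fs i).indicator (fun _ => ENNReal.ofReal (c i)) x := setLIntegral_le_lintegral _ _
          _ = ENNReal.ofReal (c i) * volume (Fs i) := by
              rw [lintegral_indicator_const (measurableSet_toMeasurable _ _)]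
          _ ≤ ENNReal.ofReal (c i) * (2⁻¹ ^ i * volume Q₀.set) := by
              gcongr
              rw [measure_toMeasurable]
              exact JN_decay hb h1 i Q₀
          _ = _ := by ring
      calc _ ≤ ENNReal.ofReal (c 0) * volume Q₀.set +
            ∑' i : ℕ, ENNReal.ofReal (c i) * 2⁻¹ ^ i * volume Q₀.set := by
              gcongr with i
              · simp
              · exact hterm i
        _ = _ := by
              rw [ENNReal.tsum_mul_right, hCE, ← add_mul]
              push_cast
              rfl
    · intro i
      exact (measurable_const.indicator (measurableSet_toMeasurable _ _)).aemeasurable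

lemma osc_le_of_ae {n : ℕ} {b : RSp n → ℝ} {m : ℝ} (hm : 0 ≤ m) {x : RSp n}
    (hx : ∀ ε > 0, ∀ R > 0, ∃ Q : Cube n, Q.c = x ∧ Q.r ≤ R ∧ |cubeAvg Q b - b x| < ε)
    {Q₀ : Cube n} {w : ℝ≥0∞} (hw : ∀ Q : Cube n, x ∈ Q.set → Q.r ≤ Q₀.r →
        ENNReal.ofReal ((1 + |cubeAvg Q b - cubeAvg Q₀ b|) ^ m) ≤ w) :
    ENNReal.ofReal ((1 + |b x - cubeAvg Q₀ b|) ^ m) ≤ w := by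
  by_cases hwt : w = ∞
  · simp [hwt]
  choose Qs hQc hQr hQ using fun k : ℕ => hx (1 / (k + 1)) (by positivity) Q₀.r Q₀.r_pos
  have ht : Tendsto (fun k => cubeAvg (Qs k) b) atTop (nhds (b x)) := by
    rw [tendsto_iff_norm_sub_tendsto_zero]
    refine squeeze_zero (fun _ => norm_nonneg _) (fun k => (hQ k).le) tendsto_one_div_add_atTop_nhds_zero_nat
  have ht2 : Tendsto (fun k => ENNReal.ofReal ((1 + |cubeAvg (Qs k) b - cubeAvg Q₀ b|) ^ m)) atTop
      (nhds (ENNReal.ofReal ((1 + |b x - cubeAvg Q₀ b|) ^ m))) := by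
    apply ENNReal.tendsto_ofReal
    exact (((ht.sub_const _).abs).const_add 1).rpow_const (Or.inr hm)
  refine le_of_tendsto' ht2 fun k => hw _ ?_ (hQr k)
  rw [← hQc k]; exact (Qs k).center_mem

/-- John–Nirenberg, moment form. -/
lemma JN_moment (n : ℕ) (m : ℝ) (hm : 0 ≤ m) : ∃ C : ℝ≥0, ∀ b : RSp n → ℝ,
    LocallyIntegrable b volume → bmoNorm b ≤ 1 → ∀ Q : Cube n,
      ∫⁻ x in Q.set, ENNReal.ofReal ((1 + |b x - cubeAvg Q b|) ^ m) ≤ C * volume Q.set := by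
  obtain ⟨C, hC⟩ := JN_majorant n m hm
  refine ⟨C, fun b hb h1 Q => ?_⟩
  obtain ⟨W, -, hW, hI⟩ := hC b hb h1 Q
  refine le_trans (lintegral_mono_ae ?_) hI
  filter_upwards [ae_restrict_mem Q.measurableSet, ae_restrict_of_ae (ae_tendsto_cubeAvg hb)]
    with x hxQ hx
  exact osc_le_of_ae hm hx (hW x hxQ)

open MeasureTheory NNReal ENNReal Filter Set

lemma trunc_le {n : ℕ} {G : RSp n → ℝ≥0∞} (hG : Measurable G) (Q : Cube n) {c : ℝ≥0∞} (hc : c ≠ ∞)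
    (h : c * volume Q.set ≤ ∫⁻ x in Q.set, G x) :
    c * volume Q.set ≤ 2 * ∫⁻ x in Q.set, {x | c < 2 * G x}.indicator G x := by
  have hms : MeasurableSet {x | c < 2 * G x} := measurableSet_lt measurable_const (hG.const_mul 2)
  have h1 : ∫⁻ x in Q.set, G x ≤ (∫⁻ x in Q.set, {x | c < 2 * G x}.indicator G x)
      + c / 2 * volume Q.set := by
    rw [← setLIntegral_const, ← lintegral_add_left (hG.indicator hms)]
    refine lintegral_mono fun x => ?_
    by_cases hx : c < 2 * G x
    · rw [indicator_of_mem (by exact hx)]; exact le_self_add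
    · rw [indicator_of_notMem (by exact hx), zero_add]
      rw [ENNReal.le_div_iff_mul_le (by simp) (by simp), mul_comm]
      exact not_lt.1 hx
  have h2 := h.trans h1
  have h3 : c * volume Q.set = c / 2 * volume Q.set + c / 2 * volume Q.set := by
    rw [← add_mul, ENNReal.add_halves]
  have hfin : c / 2 * volume Q.set ≠ ∞ := ENNReal.mul_ne_top (by simp [ENNReal.div_eq_top, hc]) Q.volume_ne_top
  rw [h3] at h2
  have h4 := (ENNReal.add_le_add_iff_right hfin).1 h2
  rw [h3, two_mul]
  exact add_le_add h4 h4

lemma level_pow {P : ℝ} (hP : 1 < P) (c g : ℝ≥0∞) (hg : c < 2 * g) :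
    c ^ (P - 1) * g ≤ 2 ^ (P - 1) * g ^ P := by
  have h1 : c ^ (P - 1) ≤ 2 ^ (P - 1) * g ^ (P - 1) := by
    rw [← ENNReal.mul_rpow_of_nonneg _ _ (by linarith)]
    exact ENNReal.rpow_le_rpow hg.le (by linarith)
  calc c ^ (P - 1) * g ≤ 2 ^ (P - 1) * g ^ (P - 1) * g := by gcongr
    _ = 2 ^ (P - 1) * (g ^ (P - 1) * g ^ (1:ℝ)) := by rw [ENNReal.rpow_one]; ring
    _ = _ := by
      rw [← ENNReal.rpow_add_of_nonneg _ _ (by linarith) (by norm_num)]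
      congr 2; ring

lemma geom_level {P : ℝ} (hP : 1 < P) : ∃ C : ℝ≥0, ∀ g : ℝ≥0∞,
    ∑' k : ℤ, ((2:ℝ≥0∞) ^ k) ^ (P - 1) * (if (2:ℝ≥0∞) ^ k < 2 * g then g else 0) ≤ C * g ^ P := by
  set ρ : ℝ≥0∞ := ((2:ℝ≥0∞) ^ (P - 1))⁻¹ with hρ
  have hρ1 : ρ < 1 := by
    rw [hρ, ENNReal.inv_lt_one]
    exact ENNReal.one_lt_rpow (by norm_num) (by linarith)
  have hs : (1 - ρ)⁻¹ ≠ ∞ := by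
    rw [ENNReal.inv_ne_top]
    exact (tsub_pos_of_lt hρ1).ne'
  set C : ℝ≥0∞ := 2 ^ (P - 1) * (1 - ρ)⁻¹ with hC
  have hCt : C ≠ ∞ := ENNReal.mul_ne_top (ENNReal.rpow_ne_top_of_nonneg (by linarith) (by simp)) hs
  have hC0 : C ≠ 0 := by
    apply mul_ne_zero
    · exact (ENNReal.rpow_pos (by norm_num) (by simp)).ne'
    · rw [ENNReal.inv_ne_zero]; exact ne_top_of_le_ne_top ENNReal.one_ne_top tsub_le_self
  refine ⟨C.toNNReal, fun g => ?_⟩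
  rw [ENNReal.coe_toNNReal hCt]
  by_cases h0 : g = 0
  · simp [h0]
  by_cases ht : g = ∞
  · rw [ht, ENNReal.top_rpow_of_pos (by linarith), ENNReal.mul_top hC0]; exact le_top
  obtain ⟨k0, hk1, hk2⟩ := ENNReal.exists_mem_Ioc_zpow (x := 2 * g) (y := 2) (by simp [h0])
    (ENNReal.mul_ne_top (by simp) ht) (by norm_num) (by simp)
  have hinj : Function.Injective (fun j : ℕ => k0 - (j:ℤ)) := by
    intro a b h; simpa using h
  rw [← hinj.tsum_eq]
  · have hterm : ∀ j : ℕ, ((2:ℝ≥0∞) ^ (k0 - (j:ℤ))) ^ (P - 1) *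
        (if (2:ℝ≥0∞) ^ (k0 - (j:ℤ)) < 2 * g then g else 0) ≤ 2 ^ (P - 1) * g ^ P * ρ ^ j := by
      intro j
      have e1 : ((2:ℝ≥0∞) ^ (k0 - (j:ℤ))) = (2:ℝ≥0∞) ^ k0 * ((2:ℝ≥0∞)⁻¹) ^ j := by
        rw [ENNReal.zpow_sub (by norm_num) (by simp), ← ENNReal.inv_pow, zpow_natCast]
      have e2 : (((2:ℝ≥0∞)⁻¹) ^ j) ^ (P - 1) = ρ ^ j := by
        rw [hρ, ← ENNReal.inv_rpow, ← ENNReal.rpow_natCast, ← ENNReal.rpow_mul, mul_comm,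
          ENNReal.rpow_mul, ENNReal.rpow_natCast]
      calc _ ≤ ((2:ℝ≥0∞) ^ (k0 - (j:ℤ))) ^ (P - 1) * g := by
            gcongr; split_ifs <;> simp
        _ = ((2:ℝ≥0∞) ^ k0) ^ (P - 1) * g * ρ ^ j := by
            rw [e1, ENNReal.mul_rpow_of_nonneg _ _ (by linarith), e2]; ring
        _ ≤ _ := mul_le_mul_left (level_pow hP _ _ hk1) _
    refine (ENNReal.tsum_le_tsum hterm).trans ?_
    rw [ENNReal.tsum_mul_left, ENNReal.tsum_geometric, hC]
    apply le_of_eq; ring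
  · intro k hk
    rw [Function.mem_support] at hk
    have : (2:ℝ≥0∞) ^ k < 2 * g := by
      by_contra h; simp [h] at hk
    have h3 := this.trans_le hk2
    have h4 : k < k0 + 1 := by
      by_contra h
      exact absurd (ENNReal.zpow_le_of_le (by norm_num : (1:ℝ≥0∞) ≤ 2) (not_lt.1 h)) (not_le.2 h3)
    exact ⟨(k0 - k).toNat, by simp; omega⟩

lemma one_add_rpow_le {m u v w : ℝ} (hm : 0 ≤ m) (hu : 0 ≤ u) (hv : 0 ≤ v) (hw : 0 ≤ w) (h : w ≤ u + v) {W : ℝ≥0∞}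
    (h1 : ENNReal.ofReal ((1 + u) ^ m) ≤ W) (h2 : ENNReal.ofReal ((1 + v) ^ m) ≤ W) :
    ENNReal.ofReal ((1 + w) ^ m) ≤ ENNReal.ofReal (2 ^ m) * W := by
  rcases le_total u v with h' | h'
  · calc _ ≤ ENNReal.ofReal ((2 * (1 + v)) ^ m) := by
          apply ENNReal.ofReal_le_ofReal
          apply Real.rpow_le_rpow <;> linarith
      _ ≤ _ := by
        rw [Real.mul_rpow (by norm_num) (by linarith), ENNReal.ofReal_mul (by positivity)]
        gcongr
  · calc _ ≤ ENNReal.ofReal ((2 * (1 + u)) ^ m) := by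
          apply ENNReal.ofReal_le_ofReal
          apply Real.rpow_le_rpow <;> linarith
      _ ≤ _ := by
        rw [Real.mul_rpow (by norm_num) (by linarith), ENNReal.ofReal_mul (by positivity)]
        gcongr

lemma radius_bound {n : ℕ} (hn : 0 < n) (Q : Cube n) {V : ℝ≥0∞} (hV : V ≠ ∞) (h : volume Q.set ≤ V) :
    Q.r ≤ max 1 V.toReal := by
  rw [Q.volume_eq, ENNReal.ofReal_le_iff_le_toReal hV] at h
  have hr := Q.r_pos
  by_cases h1 : 2 * Q.r ≤ 1
  · exact le_max_of_le_left (by linarith)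
  · refine le_max_of_le_right ?_
    have := le_self_pow₀ (not_le.1 h1).le hn.ne'
    linarith

lemma maximal_weighted {n : ℕ} (hn : 0 < n) {P m : ℝ} (hP : 1 < P) (hm : 0 ≤ m) : ∃ C : ℝ≥0, ∀ b : RSp n → ℝ,
    LocallyIntegrable b volume → bmoNorm b ≤ 1 → ∀ G : RSp n → ℝ≥0∞, Measurable G →
    ∫⁻ x, G x ^ P ≠ ∞ → ∃ S : RSp n → ℝ≥0∞, Measurable S ∧
      (∀ᵐ x, ∀ Q : Cube n, x ∈ Q.set → ENNReal.ofReal ((1 + |b x - cubeAvg Q b|) ^ m) *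
        ((volume Q.set)⁻¹ * ∫⁻ y in Q.set, G y) ^ P ≤ S x) ∧
      ∫⁻ x, S x ≤ C * ∫⁻ x, G x ^ P := by
  obtain ⟨C1, hC1⟩ := JN_majorant n m hm
  obtain ⟨C2, hC2⟩ := geom_level hP
  set K : ℝ≥0∞ := 2 ^ P * ENNReal.ofReal (2 ^ m) with hK
  have hKt : K ≠ ∞ := ENNReal.mul_ne_top (ENNReal.rpow_ne_top_of_nonneg (by linarith) (by simp)) (by simp)
  set D : ℝ≥0∞ := C1 * ENNReal.ofReal (5 ^ n) * 2 with hD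
  have hDt : D ≠ ∞ := ENNReal.mul_ne_top (ENNReal.mul_ne_top (by simp) (by simp)) (by simp)
  have hKDt : K * D * C2 ≠ ∞ := ENNReal.mul_ne_top (ENNReal.mul_ne_top hKt hDt) (by simp)
  refine ⟨(K * D * C2).toNNReal, fun b hb hb1 G hG hGP => ?_⟩
  rw [ENNReal.coe_toNNReal hKDt]
  choose W hWm hW hWi using hC1 b hb hb1
  let c : ℤ → ℝ≥0∞ := fun k => (2:ℝ≥0∞) ^ k
  have hct : ∀ k, c k ≠ ∞ := fun k => (ENNReal.zpow_lt_top (by norm_num) (by simp) k).ne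
  have hc0 : ∀ k, c k ≠ 0 := fun k => (ENNReal.zpow_pos (by norm_num) (by simp) k).ne'
  let T : ℤ → Set (Cube n) := fun k => {Q | c k * volume Q.set ≤ ∫⁻ x in Q.set, G x}
  have hms : ∀ k, MeasurableSet {x | c k < 2 * G x} := fun k =>
    measurableSet_lt measurable_const (hG.const_mul 2)
  have htr : ∀ k, ∀ Q ∈ T k, c k * volume Q.set ≤ 2 * ∫⁻ x in Q.set, {x | c k < 2 * G x}.indicator G x :=
    fun k Q hQ => trunc_le hG Q (hct k) hQ
  have hvol : ∀ k, ∀ Q ∈ T k, volume Q.set ≤ ((c k) ^ (P-1) * c k)⁻¹ * (2 * (2 ^ (P - 1) * ∫⁻ x, G x ^ P)) := by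
    intro k Q hQ
    have hne : (c k) ^ (P-1) ≠ 0 := (ENNReal.rpow_pos (pos_iff_ne_zero.2 (hc0 k)) (hct k)).ne'
    have hnt : (c k) ^ (P-1) ≠ ∞ := ENNReal.rpow_ne_top_of_nonneg (by linarith) (hct k)
    have hX0 : (c k) ^ (P-1) * c k ≠ 0 := mul_ne_zero hne (hc0 k)
    have hXt : (c k) ^ (P-1) * c k ≠ ∞ := ENNReal.mul_ne_top hnt (hct k)
    rw [mul_comm ((c k) ^ (P-1) * c k)⁻¹, ← div_eq_mul_inv, ENNReal.le_div_iff_mul_le (Or.inl hX0) (Or.inl hXt),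
      mul_comm, mul_assoc]
    calc _ ≤ (c k) ^ (P-1) * (2 * ∫⁻ x in Q.set, {x | c k < 2 * G x}.indicator G x) := by
          exact mul_le_mul_right (htr k Q hQ) _
      _ = 2 * ∫⁻ x in Q.set, (c k) ^ (P-1) * {x | c k < 2 * G x}.indicator G x := by
          rw [lintegral_const_mul _ (hG.indicator (hms k))]; ring
      _ ≤ 2 * ∫⁻ x, 2 ^ (P - 1) * G x ^ P := by
          refine mul_le_mul_right ?_ _
          refine (setLIntegral_le_lintegral _ _).trans (lintegral_mono fun x => ?_)
          by_cases hx : c k < 2 * G x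
          · rw [indicator_of_mem (by exact hx)]; exact level_pow hP _ _ hx
          · rw [indicator_of_notMem (by exact hx)]; simp
      _ = _ := by rw [lintegral_const_mul _ (hG.pow_const P)]
  have hR : ∀ k, ∃ R, ∀ Q ∈ T k, Q.r ≤ R := fun k =>
    ⟨_, fun Q hQ => radius_bound hn Q (V := ((c k) ^ (P-1) * c k)⁻¹ * (2 * (2 ^ (P - 1) * ∫⁻ x, G x ^ P))) (by
      have hne : (c k) ^ (P-1) ≠ 0 := (ENNReal.rpow_pos (pos_iff_ne_zero.2 (hc0 k)) (hct k)).ne'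
      refine ENNReal.mul_ne_top (by simp [hne, hc0 k]) (ENNReal.mul_ne_top (by simp) (ENNReal.mul_ne_top ?_ hGP))
      exact ENNReal.rpow_ne_top_of_nonneg (by linarith) (by simp)) (hvol k Q hQ)⟩
  choose R hR using hR
  choose u huT huc hud hu using fun k => cube_vitali (T k) (R k) (hR k)
  have : ∀ k, Countable (u k) := fun k => (huc k).to_subtype
  let w : Cube n → RSp n → ℝ≥0∞ := fun Q => ((Q.dil 5 five_pos).set).indicator (W (Q.dil 5 five_pos))
  have hwm : ∀ Q, Measurable (w Q) := fun Q => (hWm _).indicator (Cube.measurableSet _)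
  let S : RSp n → ℝ≥0∞ := fun x => ∑' k : ℤ, K * c k ^ P * ∑' Q : u k, w Q.1 x
  have hSm : Measurable S := Measurable.tsum fun k => (Measurable.tsum fun Q => hwm _).const_mul _
  refine ⟨S, hSm, ?_, ?_⟩
  · filter_upwards [ae_tendsto_cubeAvg hb] with x hx Q hxQ
    set A := (volume Q.set)⁻¹ * ∫⁻ y in Q.set, G y with hA
    by_cases hA0 : A = 0
    · rw [hA0, ENNReal.zero_rpow_of_pos (by linarith), mul_zero]; exact zero_le
    have hAt : A ≠ ∞ := by
      refine ENNReal.mul_ne_top (by simp [Q.volume_ne_zero]) ?_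
      refine ne_top_of_le_ne_top (b := volume Q.set + ∫⁻ x, G x ^ P) (by simp [hGP, Q.volume_ne_top]) ?_
      calc ∫⁻ y in Q.set, G y ≤ ∫⁻ y in Q.set, (1 + G y ^ P) := by
            refine lintegral_mono fun y => ?_
            rcases le_total (G y) 1 with h | h
            · exact h.trans le_self_add
            · refine le_trans ?_ le_add_self
              calc G y = G y ^ (1:ℝ) := by simp
                _ ≤ _ := ENNReal.rpow_le_rpow_of_exponent_le h hP.le
        _ = volume Q.set + ∫⁻ y in Q.set, G y ^ P := by
            rw [lintegral_add_left measurable_const]; simp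
        _ ≤ _ := by gcongr; exact Measure.restrict_le_self
    obtain ⟨k, hk1, hk2⟩ := ENNReal.exists_mem_Ioc_zpow hA0 hAt (y := 2) (by norm_num) (by simp)
    have hQT : Q ∈ T k := by
      have : c k ≤ A := hk1.le
      calc c k * volume Q.set ≤ A * volume Q.set := by gcongr
        _ = _ := by
          rw [hA, mul_comm, ← mul_assoc, ENNReal.mul_inv_cancel Q.volume_ne_zero Q.volume_ne_top, one_mul]
    obtain ⟨Q', hQ'u, hsub, hrad⟩ := hu k Q hQT
    set Q5 := Q'.dil 5 five_pos with hQ5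
    have hr5 : Q.r ≤ Q5.r := by
      simp only [hQ5, Cube.dil]; have := Q'.r_pos; linarith
    have hx5 : x ∈ Q5.set := hsub hxQ
    have h1 := osc_le_of_ae hm hx (hW Q5 x hx5)
    have h2 := hW Q5 x hx5 Q hxQ hr5
    have h3 : ENNReal.ofReal ((1 + |b x - cubeAvg Q b|) ^ m) ≤ ENNReal.ofReal (2 ^ m) * W Q5 x := by
      refine one_add_rpow_le hm (abs_nonneg _) (abs_nonneg _) (abs_nonneg _) ?_ h1 h2
      calc |b x - cubeAvg Q b| = |(b x - cubeAvg Q5 b) - (cubeAvg Q b - cubeAvg Q5 b)| := by ring_nf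
        _ ≤ _ := abs_sub _ _
    have h4 : A ^ P ≤ 2 ^ P * c k ^ P := by
      rw [← ENNReal.mul_rpow_of_nonneg _ _ (by linarith)]
      refine ENNReal.rpow_le_rpow (hk2.trans (le_of_eq ?_)) (by linarith)
      rw [ENNReal.zpow_add (by norm_num) (by simp)]; simp [c, mul_comm]
    calc _ ≤ ENNReal.ofReal (2 ^ m) * W Q5 x * (2 ^ P * c k ^ P) := by gcongr
      _ = K * c k ^ P * w Q' x := by
        simp only [w]; rw [indicator_of_mem hx5, hK]; ring
      _ ≤ K * c k ^ P * ∑' Q : u k, w Q.1 x := by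
        gcongr; exact ENNReal.le_tsum (f := fun Q : u k => w Q.1 x) ⟨Q', hQ'u⟩
      _ ≤ S x := ENNReal.le_tsum (f := fun k : ℤ => K * c k ^ P * ∑' Q : u k, w Q.1 x) k
  · have hwi : ∀ Q, ∫⁻ x, w Q x ≤ C1 * ENNReal.ofReal (5 ^ n) * volume Q.set := by
      intro Q
      simp only [w]
      rw [lintegral_indicator (Cube.measurableSet _)]
      refine (hWi _).trans (le_of_eq ?_)
      rw [Cube.volume_dil]; ring
    have hk : ∀ k, c k ^ P * ∑' Q : u k, ∫⁻ x, w Q.1 x ≤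
        D * ∫⁻ x, c k ^ (P - 1) * (if c k < 2 * G x then G x else 0) := by
      intro k
      have e : c k ^ P = c k ^ (P - 1) * c k := by
        conv_rhs => rw [← ENNReal.rpow_one (c k), ← ENNReal.rpow_mul, ← ENNReal.rpow_add _ _ (hc0 k) (hct k)]
        congr 1; ring
      have hf : (fun x => if c k < 2 * G x then G x else 0) = {x | c k < 2 * G x}.indicator G := by
        ext x; simp [indicator]
      have hfm : Measurable (fun x => if c k < 2 * G x then G x else 0) := by
        rw [hf]; exact hG.indicator (hms k)
      calc _ = c k ^ (P - 1) * ∑' Q : u k, c k * ∫⁻ x, w Q.1 x := by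
            rw [e, ENNReal.tsum_mul_left]; ring
        _ ≤ c k ^ (P - 1) * ∑' Q : u k, D * ∫⁻ x in Q.1.set, (if c k < 2 * G x then G x else 0) := by
            refine mul_le_mul_right (ENNReal.tsum_le_tsum fun Q => ?_) _
            rw [hf]
            calc _ ≤ c k * (C1 * ENNReal.ofReal (5 ^ n) * volume Q.1.set) := by gcongr; exact hwi _
              _ = C1 * ENNReal.ofReal (5 ^ n) * (c k * volume Q.1.set) := by ring
              _ ≤ C1 * ENNReal.ofReal (5 ^ n) * (2 * ∫⁻ x in Q.1.set, {x | c k < 2 * G x}.indicator G x) := by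
                exact mul_le_mul_right (htr k Q.1 (huT k Q.2)) _
              _ = _ := by rw [hD]; ring
        _ = D * (c k ^ (P - 1) * ∫⁻ x in ⋃ Q : u k, Q.1.set, (if c k < 2 * G x then G x else 0)) := by
            rw [ENNReal.tsum_mul_left, lintegral_iUnion (fun Q : u k => Q.1.measurableSet)
              (fun a b hab => hud k a.2 b.2 (fun h => hab (Subtype.ext h)))]
            ring
        _ ≤ D * (c k ^ (P - 1) * ∫⁻ x, (if c k < 2 * G x then G x else 0)) := by
            gcongr; exact Measure.restrict_le_self
        _ = _ := by rw [lintegral_const_mul _ hfm]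
    have hmm : ∀ k, Measurable (fun x => c k ^ (P - 1) * (if c k < 2 * G x then G x else 0)) := by
      intro k
      exact (Measurable.ite (hms k) hG measurable_const).const_mul _
    calc ∫⁻ x, S x = ∑' k : ℤ, K * (c k ^ P * ∑' Q : u k, ∫⁻ x, w Q.1 x) := by
          simp only [S]
          rw [lintegral_tsum (fun k => ((Measurable.tsum fun Q => hwm _).const_mul _).aemeasurable)]
          congr 1; ext k
          rw [lintegral_const_mul _ (Measurable.tsum fun Q => hwm _),
            lintegral_tsum (fun Q => (hwm _).aemeasurable)]; ring
      _ ≤ ∑' k : ℤ, K * (D * ∫⁻ x, c k ^ (P - 1) * (if c k < 2 * G x then G x else 0)) := by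
          exact ENNReal.tsum_le_tsum fun k => mul_le_mul_right (hk k) _
      _ = K * D * ∫⁻ x, ∑' k : ℤ, c k ^ (P - 1) * (if c k < 2 * G x then G x else 0) := by
          rw [ENNReal.tsum_mul_left, ENNReal.tsum_mul_left, lintegral_tsum (fun k => (hmm k).aemeasurable)]; ring
      _ ≤ K * D * ∫⁻ x, C2 * G x ^ P := by
          gcongr with x; exact hC2 (G x)
      _ = _ := by rw [lintegral_const_mul _ (hG.pow_const P)]; ring

open MeasureTheory NNReal ENNReal Filter Set

section PhiInv
variable {n : ℕ} {φ : RSp n → ℝ≥0 → ℝ≥0∞}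

lemma phiInv_mono (φ : RSp n → ℝ≥0 → ℝ≥0∞) (x : RSp n) {t t' : ℝ≥0∞} (h : t ≤ t') :
    phiInv φ x t ≤ phiInv φ x t' := by
  apply sInf_le_sInf
  apply image_mono
  intro s hs
  exact h.trans hs

lemma phiInv_le {x : RSp n} {t : ℝ≥0∞} {s : ℝ≥0} (h : t ≤ φ x s) : phiInv φ x t ≤ s :=
  sInf_le ⟨s, h, rfl⟩

lemma lt_of_lt_phiInv {x : RSp n} {t : ℝ≥0∞} {s : ℝ≥0} (h : (s:ℝ≥0∞) < phiInv φ x t) : φ x s < t := by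
  by_contra h'
  exact absurd (phiInv_le (not_lt.1 h')) (not_le.2 h)

lemma le_phiInv_iff {x : RSp n} {t a : ℝ≥0∞} :
    a ≤ phiInv φ x t ↔ ∀ s : ℝ≥0, t ≤ φ x s → a ≤ s := by
  simp only [phiInv, le_sInf_iff, mem_image, mem_ofPred_eq]
  constructor
  · intro h s hs; exact h _ ⟨s, hs, rfl⟩
  · rintro h _ ⟨s, hs, rfl⟩; exact h s hs

lemma le_phiInv_of_lt (hφ : IsWeakPhi univ φ) {x : RSp n} {t : ℝ≥0∞} {s : ℝ≥0} (h : φ x s < t) :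
    (s:ℝ≥0∞) ≤ phiInv φ x t := by
  rw [le_phiInv_iff]
  intro u hu
  by_contra h'
  have h2 : u ≤ s := by exact_mod_cast (not_le.1 h').le
  exact absurd (hu.trans (hφ.mono x (mem_univ x) h2)) (not_le.2 h)

lemma phiInv_lt_top (hφ : IsWeakPhi univ φ) (x : RSp n) {t : ℝ≥0∞} (h : t < ∞) :
    phiInv φ x t < ∞ := by
  have := (hφ.lim_top x (mem_univ x)).eventually (lt_mem_nhds h)
  obtain ⟨s, hs⟩ := this.exists
  exact (phiInv_le hs.le).trans_lt ENNReal.coe_lt_top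

lemma phiInv_pos (hφ : IsWeakPhi univ φ) (x : RSp n) {t : ℝ≥0∞} (h : 0 < t) :
    0 < phiInv φ x t := by
  have := (hφ.lim_zero x (mem_univ x)).eventually (gt_mem_nhds h)
  obtain ⟨s, hs, hs0⟩ := (this.and self_mem_nhdsWithin).exists
  exact lt_of_lt_of_le (by exact_mod_cast hs0) (le_phiInv_of_lt hφ hs)

lemma ainc_mul (hφ : IsWeakPhi univ φ) {p : ℝ} {L : ℝ≥0} (hL1 : 1 ≤ L)
    (hL : ∀ x ∈ (univ : Set (RSp n)), ∀ s t : ℝ≥0, 0 < s → s < t →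
    φ x s / (s : ℝ≥0∞) ^ p ≤ (L : ℝ≥0∞) * (φ x t / (t : ℝ≥0∞) ^ p)) (hp : 0 < p) (x : RSp n) (s c : ℝ≥0) (hc : 1 ≤ c) :
    (c:ℝ≥0∞) ^ p * φ x s ≤ L * φ x (c * s) := by
  rcases eq_or_lt_of_le hc with rfl | hc1
  · simp only [ENNReal.coe_one, ENNReal.one_rpow, one_mul]
    exact le_mul_of_one_le_left zero_le (by exact_mod_cast hL1)
  rcases eq_or_lt_of_le (zero_le (a := s)) with rfl | hs
  · simp [hφ.zero x (mem_univ x)]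
  have hlt : s < c * s := by simpa using (mul_lt_mul_of_pos_right hc1 hs)
  have h := hL x (mem_univ x) s (c * s) hs hlt
  have hs0 : (s:ℝ≥0∞) ^ p ≠ 0 := (ENNReal.rpow_pos (by exact_mod_cast hs) (by simp)).ne'
  have hst : (s:ℝ≥0∞) ^ p ≠ ∞ := ENNReal.rpow_ne_top_of_nonneg hp.le (by simp)
  have hc0 : (c:ℝ≥0∞) ^ p ≠ 0 := (ENNReal.rpow_pos (by exact_mod_cast (zero_lt_one.trans hc1)) (by simp)).ne'
  have hct : (c:ℝ≥0∞) ^ p ≠ ∞ := ENNReal.rpow_ne_top_of_nonneg hp.le (by simp)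
  rw [ENNReal.coe_mul, ENNReal.mul_rpow_of_nonneg _ _ hp.le, ENNReal.div_le_iff hs0 hst] at h
  generalize (c:ℝ≥0∞) ^ p = C at *
  generalize (s:ℝ≥0∞) ^ p = S at *
  calc C * φ x s ≤ C * (L * (φ x (c * s) / (C * S)) * S) := by gcongr
    _ = L * (φ x (c * s) * ((C * S) * (C * S)⁻¹)) := by rw [div_eq_mul_inv]; ring
    _ = _ := by rw [ENNReal.mul_inv_cancel (mul_ne_zero hc0 hs0) (ENNReal.mul_ne_top hct hst), mul_one]

lemma adec_mul (hφ : IsWeakPhi univ φ) {p : ℝ} {L : ℝ≥0} (hL1 : 1 ≤ L)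
    (hL : ∀ x ∈ (univ : Set (RSp n)), ∀ s t : ℝ≥0, 0 < s → s < t →
    φ x t / (t : ℝ≥0∞) ^ p ≤ (L : ℝ≥0∞) * (φ x s / (s : ℝ≥0∞) ^ p)) (hp : 0 < p) (x : RSp n) (s c : ℝ≥0) (hc : 1 ≤ c) :
    φ x (c * s) ≤ L * (c:ℝ≥0∞) ^ p * φ x s := by
  rcases eq_or_lt_of_le hc with rfl | hc1
  · simp only [ENNReal.coe_one, ENNReal.one_rpow, one_mul, mul_one]
    exact le_mul_of_one_le_left zero_le (by exact_mod_cast hL1)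
  rcases eq_or_lt_of_le (zero_le (a := s)) with rfl | hs
  · simp [hφ.zero x (mem_univ x)]
  have hlt : s < c * s := by simpa using (mul_lt_mul_of_pos_right hc1 hs)
  have h := hL x (mem_univ x) s (c * s) hs hlt
  have hs0 : (s:ℝ≥0∞) ^ p ≠ 0 := (ENNReal.rpow_pos (by exact_mod_cast hs) (by simp)).ne'
  have hst : (s:ℝ≥0∞) ^ p ≠ ∞ := ENNReal.rpow_ne_top_of_nonneg hp.le (by simp)
  have hc0 : (c:ℝ≥0∞) ^ p ≠ 0 := (ENNReal.rpow_pos (by exact_mod_cast (zero_lt_one.trans hc1)) (by simp)).ne'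
  have hct : (c:ℝ≥0∞) ^ p ≠ ∞ := ENNReal.rpow_ne_top_of_nonneg hp.le (by simp)
  rw [ENNReal.coe_mul, ENNReal.mul_rpow_of_nonneg _ _ hp.le,
    ENNReal.div_le_iff (mul_ne_zero hc0 hs0) (ENNReal.mul_ne_top hct hst)] at h
  generalize (c:ℝ≥0∞) ^ p = C at *
  generalize (s:ℝ≥0∞) ^ p = S at *
  calc φ x (c * s) ≤ _ := h
    _ = L * C * φ x s * (S * S⁻¹) := by rw [div_eq_mul_inv]; ring
    _ = _ := by rw [ENNReal.mul_inv_cancel hs0 hst, mul_one]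

lemma almost_inc_mul (hφ : IsWeakPhi univ φ) : ∃ L : ℝ≥0, 1 ≤ L ∧ ∀ (x : RSp n) (s c : ℝ≥0), 0 < c → c ≤ 1 →
    φ x (c * s) ≤ L * c * φ x s := by
  obtain ⟨L, hL1, hL⟩ := hφ.almost_inc
  refine ⟨L, hL1, fun x s c hc0 hc1 => ?_⟩
  have := ainc_mul (p := 1) hφ hL1 (by simpa using hL) one_pos x (c * s) c⁻¹ (by
    rwa [one_le_inv₀ hc0])
  rw [ENNReal.rpow_one, inv_mul_cancel_left₀ hc0.ne', ENNReal.coe_inv hc0.ne'] at this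
  have hc : (c:ℝ≥0∞) ≠ 0 := by exact_mod_cast hc0.ne'
  calc φ x (c * s) = c * ((c:ℝ≥0∞)⁻¹ * φ x (c * s)) := by
        rw [← mul_assoc, ENNReal.mul_inv_cancel hc (by simp), one_mul]
    _ ≤ c * (L * φ x s) := by gcongr
    _ = _ := by ring

lemma phi_ne_top (hφ : IsWeakPhi univ φ) {p : ℝ} {L : ℝ≥0} (hL1 : 1 ≤ L)
    (hL : ∀ x ∈ (univ : Set (RSp n)), ∀ s t : ℝ≥0, 0 < s → s < t →
    φ x t / (t : ℝ≥0∞) ^ p ≤ (L : ℝ≥0∞) * (φ x s / (s : ℝ≥0∞) ^ p)) (hp : 0 < p) (x : RSp n) (s : ℝ≥0) :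
    φ x s ≠ ∞ := by
  have := (hφ.lim_zero x (mem_univ x)).eventually (gt_mem_nhds (show (0:ℝ≥0∞) < 1 by norm_num))
  obtain ⟨u, hu, hu0⟩ := (this.and self_mem_nhdsWithin).exists
  have hu0' : 0 < u := hu0
  have h1 := adec_mul hφ hL1 hL hp x u (max 1 (s / u)) (le_max_left _ _)
  refine ne_top_of_le_ne_top ?_ ((hφ.mono x (mem_univ x) ?_).trans h1)
  · exact ENNReal.mul_ne_top (ENNReal.mul_ne_top (by simp) (ENNReal.rpow_ne_top_of_nonneg hp.le (by simp)))
      (hu.trans ENNReal.one_lt_top).ne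
  · calc s = s / u * u := by rw [div_mul_cancel₀ _ hu0'.ne']
      _ ≤ _ := by gcongr; exact le_max_right _ _

lemma phiInv_up (hφ : IsWeakPhi univ φ) {p : ℝ} (hp : 0 < p) (h : AInc p univ φ) : ∃ D : ℝ≥0, 1 ≤ D ∧
    ∀ (x : RSp n) (t t' : ℝ≥0), 0 < t → t ≤ t' →
      phiInv φ x t' ≤ D * ((t' / t : ℝ≥0) : ℝ≥0∞) ^ (1 / p) * phiInv φ x t := by
  obtain ⟨L, hL1, hL⟩ := h
  refine ⟨L ^ (1/p), NNReal.one_le_rpow hL1 (by positivity), fun x t t' ht htt => ?_⟩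
  set l := t' / t with hl
  have hl1 : 1 ≤ l := by rw [hl, one_le_div ht]; exact htt
  have hlt : t' = l * t := by rw [hl, div_mul_cancel₀ _ ht.ne']
  set c : ℝ≥0 := (L * l) ^ (1/p) with hc
  have hc1 : 1 ≤ c := NNReal.one_le_rpow (one_le_mul hL1 hl1) (by positivity)
  have e : ((L ^ (1/p) : ℝ≥0) : ℝ≥0∞) * (l:ℝ≥0∞) ^ (1/p) = c := by
    rw [hc, NNReal.mul_rpow, ENNReal.coe_mul, ENNReal.coe_rpow_of_nonneg l (by positivity)]
  rw [e]
  have hcp : (c:ℝ≥0∞) ^ p = L * l := by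
    rw [hc, ENNReal.coe_rpow_of_nonneg _ (by positivity), ← ENNReal.rpow_mul, one_div, inv_mul_cancel₀ hp.ne',
      ENNReal.rpow_one, ENNReal.coe_mul]
  have hc0 : (c:ℝ≥0∞) ≠ 0 := by exact_mod_cast (zero_lt_one.trans_le hc1).ne'
  rw [mul_comm, ← ENNReal.div_le_iff hc0 (by simp), le_phiInv_iff]
  intro s hs
  rw [ENNReal.div_le_iff hc0 (by simp), mul_comm, ← ENNReal.coe_mul]
  apply phiInv_le
  have h2 := ainc_mul hφ hL1 hL hp x s c hc1
  rw [hcp, mul_assoc] at h2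
  have h3 : (l:ℝ≥0∞) * φ x s ≤ φ x (c * s) :=
    (ENNReal.mul_le_mul_iff_right (by exact_mod_cast (zero_lt_one.trans_le hL1).ne') (by simp)).1 h2
  refine le_trans ?_ h3
  rw [hlt, ENNReal.coe_mul]
  gcongr

lemma phiInv_down (hφ : IsWeakPhi univ φ) {r : ℝ} (hr : 0 < r) (h : ADec (1 / r) univ φ) : ∃ D : ℝ≥0, 1 ≤ D ∧
    ∀ (x : RSp n) (t t' : ℝ≥0), 0 < t → t ≤ t' →
      phiInv φ x t ≤ D * ((t / t' : ℝ≥0) : ℝ≥0∞) ^ r * phiInv φ x t' := by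
  obtain ⟨L, hL1, hL⟩ := h
  refine ⟨L ^ r, NNReal.one_le_rpow hL1 hr.le, fun x t t' ht htt => ?_⟩
  have ht' : 0 < t' := ht.trans_le htt
  have hL0 : 0 < L := zero_lt_one.trans_le hL1
  have e : ((L ^ r : ℝ≥0) : ℝ≥0∞) * ((t / t' : ℝ≥0) : ℝ≥0∞) ^ r = ((L * (t / t')) ^ r : ℝ≥0) := by
    rw [NNReal.mul_rpow, ENNReal.coe_mul, ENNReal.coe_rpow_of_nonneg _ hr.le, ENNReal.coe_rpow_of_nonneg _ hr.le]
  rw [e]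
  set d : ℝ≥0 := (L * (t / t')) ^ r with hd
  have hd0 : 0 < d := NNReal.rpow_pos (by positivity)
  have hd0' : (d:ℝ≥0∞) ≠ 0 := by exact_mod_cast hd0.ne'
  by_cases h1 : 1 ≤ L * (t / t')
  · have : 1 ≤ d := NNReal.one_le_rpow h1 hr.le
    refine (phiInv_mono φ x (ENNReal.coe_le_coe.2 htt)).trans ?_
    exact le_mul_of_one_le_left zero_le (by exact_mod_cast this)
  · have hd1 : d ≤ 1 := NNReal.rpow_le_one (not_le.1 h1).le hr.le
    rw [mul_comm, ← ENNReal.div_le_iff hd0' (by simp), le_phiInv_iff]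
    intro s hs
    rw [ENNReal.div_le_iff hd0' (by simp), mul_comm, ← ENNReal.coe_mul]
    apply phiInv_le
    have h2 := adec_mul hφ hL1 hL (by positivity) x (d * s) d⁻¹ ((one_le_inv₀ hd0).2 hd1)
    rw [inv_mul_cancel_left₀ hd0.ne'] at h2
    have e2 : (L:ℝ≥0∞) * ((d⁻¹ : ℝ≥0) : ℝ≥0∞) ^ (1 / r) = (t' / t : ℝ≥0) := by
      rw [← ENNReal.coe_rpow_of_nonneg _ (by positivity), ← ENNReal.coe_mul]
      congr 1
      rw [NNReal.inv_rpow, hd, ← NNReal.rpow_mul, mul_one_div_cancel hr.ne', NNReal.rpow_one]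
      field_simp
    rw [e2] at h2
    have h3 := hs.trans h2
    have e3 : (t':ℝ≥0∞) = (t' / t : ℝ≥0) * t := by rw [← ENNReal.coe_mul, div_mul_cancel₀ _ ht.ne']
    rw [e3] at h3
    exact (ENNReal.mul_le_mul_iff_right (by exact_mod_cast (div_pos ht' ht).ne') (by simp)).1 h3

end PhiInv

open MeasureTheory NNReal ENNReal Filter Set

/-- Condition (A2) with a measurable error function. -/
lemma A2_meas {n : ℕ} {φ : RSp n → ℝ≥0 → ℝ≥0∞} (hφ : IsWeakPhi univ φ) (h2 : A2 φ) {ε : ℝ≥0∞} (hε : 0 < ε) :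
    ∃ φi : ℝ≥0 → ℝ≥0∞, IsWeakPhi Set.univ (fun _ : RSp n => φi) ∧
    ∃ H : RSp n → ℝ≥0∞, Measurable H ∧ (∀ x, H x ≤ 1 / 2) ∧ ∫⁻ x, H x ≤ ε ∧
    ∃ β : ℝ≥0, 0 < β ∧ β ≤ 1 ∧ ∃ s : ℝ≥0, 0 < s ∧ ∃ M : ℝ≥0,
    ∀ᵐ x ∂(volume : Measure (RSp n)), ∀ t : ℝ≥0,
      (φi t ≤ (s : ℝ≥0∞) → φ x (β * t) ≤ φi t + M * H x) ∧
      (φ x t ≤ (s : ℝ≥0∞) → φi (β * t) ≤ φ x t + M * H x) := by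
  obtain ⟨φi, hφi, h, hhI, ⟨M0, hM0⟩, β, hβ, hβ1, s, hs, hA⟩ := h2
  have hmeas : ∀ c : ℝ≥0, AEMeasurable (fun x => φ x c) volume := by
    intro c
    have := hφ.meas (fun _ => c) measurable_const
    rwa [Measure.restrict_univ] at this
  let qc : ℚ → ℝ≥0 := fun q => Real.toNNReal q
  let g1 : ℚ → RSp n → ℝ≥0∞ := fun q x => if φi (qc q) ≤ s then φ x (β * qc q) - φi (qc q) else 0
  let g2 : ℚ → RSp n → ℝ≥0∞ := fun q x => (Iic (s:ℝ≥0∞)).indicator (fun v => φi (β * qc q) - v) (φ x (qc q))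
  have hg1 : ∀ q, AEMeasurable (g1 q) volume := by
    intro q
    simp only [g1]
    split_ifs
    · exact (hmeas _).sub_const _
    · exact aemeasurable_const
  have hg2 : ∀ q, AEMeasurable (g2 q) volume := by
    intro q
    have : Measurable ((Iic (s:ℝ≥0∞)).indicator (fun v : ℝ≥0∞ => φi (β * qc q) - v)) :=
      (measurable_const.sub measurable_id).indicator measurableSet_Iic
    exact this.comp_aemeasurable (hmeas _)
  let h0 : RSp n → ℝ≥0∞ := fun x => ⨆ q, max (g1 q x) (g2 q x)
  have hh0 : AEMeasurable h0 volume := AEMeasurable.iSup fun q => (hg1 q).max (hg2 q)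
  let h1 := hh0.mk h0
  have hh1 : h0 =ᵐ[volume] h1 := hh0.ae_eq_mk
  have hle : ∀ᵐ x ∂(volume : Measure (RSp n)), h0 x ≤ h x := by
    filter_upwards [hA] with x hx
    refine iSup_le fun q => max_le ?_ ?_
    · simp only [g1]
      split_ifs with hq
      · rw [tsub_le_iff_left]; exact (hx _).1 hq
      · exact zero_le
    · simp only [g2, indicator]
      split_ifs with hq
      · rw [tsub_le_iff_left]; exact (hx _).2 hq
      · exact zero_le
  have hhI1 : ∫⁻ x, h1 x < ∞ := by
    rw [← lintegral_congr_ae hh1]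
    exact (lintegral_mono_ae hle).trans_lt hhI
  -- the constant
  obtain ⟨M1, hM1⟩ : ∃ M1 : ℝ≥0, ∫⁻ x, h1 x ≤ M1 * ε := by
    by_cases hεt : ε = ∞
    · exact ⟨1, by simp [hεt]⟩
    · refine ⟨((∫⁻ x, h1 x) / ε).toNNReal, ?_⟩
      rw [ENNReal.coe_toNNReal (ENNReal.div_ne_top hhI1.ne hε.ne'), ENNReal.div_mul_cancel hε.ne' hεt]
  set M : ℝ≥0 := M1 + 2 * M0 + 1 with hM
  have hMpos : 0 < M := by positivity
  have hMne : (M:ℝ≥0∞) ≠ 0 := by exact_mod_cast hMpos.ne'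
  have hMinv : (M:ℝ≥0∞) * (M:ℝ≥0∞)⁻¹ = 1 := ENNReal.mul_inv_cancel hMne (by simp)
  let H : RSp n → ℝ≥0∞ := fun x => min ((M:ℝ≥0∞)⁻¹ * h1 x) (1/2)
  have h1m : Measurable h1 := hh0.measurable_mk
  refine ⟨φi, hφi, H, (h1m.const_mul _).min measurable_const, fun x => min_le_right _ _, ?_, β / 2, by positivity,
    (_root_.half_le_self (zero_le)).trans hβ1, s, hs, M, ?_⟩
  · calc ∫⁻ x, H x ≤ ∫⁻ x, (M:ℝ≥0∞)⁻¹ * h1 x := lintegral_mono fun x => min_le_left _ _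
      _ = (M:ℝ≥0∞)⁻¹ * ∫⁻ x, h1 x := lintegral_const_mul _ h1m
      _ ≤ (M:ℝ≥0∞)⁻¹ * (M * ε) := by
        gcongr
        refine hM1.trans ?_
        gcongr
        rw [hM, add_assoc]; exact le_self_add
      _ = ε := by rw [← mul_assoc, mul_comm (M:ℝ≥0∞)⁻¹, hMinv, one_mul]
  · filter_upwards [hh1, hle, hM0] with x hx1 hx2 hx3 t
    have hMH : M * H x = h0 x := by
      have : (M:ℝ≥0∞)⁻¹ * h1 x ≤ 1/2 := by
        rw [← hx1]
        rw [mul_comm, ← div_eq_mul_inv, ENNReal.div_le_iff hMne (by simp)]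
        refine hx2.trans (hx3.trans ?_)
        have : (M0:ℝ≥0∞) = 1/2 * (2 * M0) := by
          rw [← mul_assoc, one_div, ENNReal.inv_mul_cancel (by norm_num) (by simp), one_mul]
        rw [this]
        gcongr
        rw [hM]
        push_cast
        rw [add_assoc]
        exact le_add_self.trans' le_self_add
      simp only [H]
      rw [min_eq_left this, ← mul_assoc, hMinv, one_mul, hx1]
    rw [hMH]
    rcases eq_or_lt_of_le (zero_le (a := t)) with rfl | ht
    · simp [hφ.zero x (mem_univ x), hφi.zero x (mem_univ x)]
    obtain ⟨q, hq1, hq2⟩ := exists_rat_btwn (show ((t / 2 : ℝ≥0) : ℝ) < (t:ℝ) by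
      exact_mod_cast half_lt_self ht)
    have hqa : t / 2 ≤ qc q := by
      rw [← NNReal.coe_le_coe]; exact hq1.le.trans (Real.le_coe_toNNReal _)
    have hqb : qc q ≤ t := by
      rw [← Real.toNNReal_coe (r := t)]; exact Real.toNNReal_le_toNNReal hq2.le
    have hqβ : β / 2 * t ≤ β * qc q := by
      calc β / 2 * t = β * (t / 2) := by ring
        _ ≤ _ := by gcongr
    constructor
    · intro hts
      have h3 : φi (qc q) ≤ φi t := hφi.mono x (mem_univ x) hqb
      have h4 : g1 q x ≤ h0 x := (le_max_left _ _).trans (le_iSup (fun q => max (g1 q x) (g2 q x)) q)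
      simp only [g1] at h4
      rw [if_pos (h3.trans hts), tsub_le_iff_left] at h4
      calc _ ≤ φ x (β * qc q) := hφ.mono x (mem_univ x) hqβ
        _ ≤ _ := h4
        _ ≤ _ := by gcongr
    · intro hts
      have h3 : φ x (qc q) ≤ φ x t := hφ.mono x (mem_univ x) hqb
      have h4 : g2 q x ≤ h0 x := (le_max_right _ _).trans (le_iSup (fun q => max (g1 q x) (g2 q x)) q)
      simp only [g2] at h4
      rw [indicator_of_mem (show φ x (qc q) ∈ Iic (s:ℝ≥0∞) from h3.trans hts), tsub_le_iff_left] at h4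
      calc _ ≤ φi (β * qc q) := hφi.mono x (mem_univ x) hqβ
        _ ≤ _ := h4
        _ ≤ _ := by gcongr

lemma exists_small (a b : ℝ≥0) (hb : 0 < b) : ∃ c : ℝ≥0, 0 < c ∧ c ≤ 1 ∧ a * c ≤ b ∧ a * c < 1 := by
  have h0 : 0 < min (1/2) (b / 2) := lt_min (by norm_num) (by positivity)
  refine ⟨min (1/2) (b / 2) / (a + 1), by positivity, ?_, ?_, ?_⟩
  · rw [div_le_one (by positivity)]
    exact ((min_le_left _ _).trans (by norm_num : (1/2:ℝ≥0) ≤ 1)).trans le_add_self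
  all_goals
    have h1 : a * (min (1/2) (b / 2) / (a + 1)) ≤ min (1/2) (b/2) := by
      rw [mul_div_assoc', div_le_iff₀ (by positivity), mul_comm]
      gcongr; exact le_self_add
  · exact h1.trans ((min_le_right _ _).trans (_root_.half_le_self hb.le))
  · exact h1.trans_lt ((min_le_left _ _).trans_lt (by norm_num))

/-- comparison for small levels -/
lemma comp_small {n : ℕ} {φ : RSp n → ℝ≥0 → ℝ≥0∞} (hφ : IsWeakPhi univ φ) (h2 : A2 φ) {ε : ℝ≥0∞} (hε : 0 < ε) :
    ∃ H : RSp n → ℝ≥0∞, Measurable H ∧ (∀ x, H x ≤ 1 / 2) ∧ ∫⁻ x, H x ≤ ε ∧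
    ∃ K : ℝ≥0, ∃ N : Set (RSp n), volume N = 0 ∧ ∀ x ∉ N, ∀ y ∉ N, ∀ t : ℝ≥0, 0 < t → t ≤ 1 →
      H x ≤ t → H y ≤ t → phiInv φ x t ≤ K * phiInv φ y t := by
  obtain ⟨φi, hφi, H, hHm, hH2, hHi, β, hβ, hβ1, s, hs, M, hA⟩ := A2_meas hφ h2 hε
  obtain ⟨L, hL1, hL⟩ := almost_inc_mul hφ
  obtain ⟨Li, hLi1, hLi⟩ := almost_inc_mul hφi
  obtain ⟨l, hl0, hl1, hls, hll⟩ := exists_small L s hs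
  obtain ⟨μ, hμ0, hμ1, hμs, hμl⟩ := exists_small (Li * (1 + M)) s hs
  obtain ⟨ν, hν0, hν1, -, hνl⟩ := exists_small (L * (1 + M)) 1 one_pos
  set k : ℝ≥0 := ν * β * μ * β * l with hk
  have hk0 : 0 < k := by positivity
  refine ⟨H, hHm, hH2, hHi, k⁻¹, {x | ¬ ∀ t : ℝ≥0,
      (φi t ≤ (s : ℝ≥0∞) → φ x (β * t) ≤ φi t + M * H x) ∧
      (φ x t ≤ (s : ℝ≥0∞) → φi (β * t) ≤ φ x t + M * H x)}, hA, fun x hx y hy t ht0 ht1 hxt hyt => ?_⟩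
  have hx : ∀ t : ℝ≥0, (φi t ≤ (s : ℝ≥0∞) → φ x (β * t) ≤ φi t + M * H x) ∧
      (φ x t ≤ (s : ℝ≥0∞) → φi (β * t) ≤ φ x t + M * H x) := not_not.1 hx
  have hy : ∀ t : ℝ≥0, (φi t ≤ (s : ℝ≥0∞) → φ y (β * t) ≤ φi t + M * H y) ∧
      (φ y t ≤ (s : ℝ≥0∞) → φi (β * t) ≤ φ y t + M * H y) := not_not.1 hy
  have hkc : ((k⁻¹ : ℝ≥0) : ℝ≥0∞) ≠ 0 := by exact_mod_cast (inv_pos.2 hk0).ne'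
  rw [mul_comm, ← ENNReal.div_le_iff hkc (by simp), le_phiInv_iff]
  intro σ hσ
  rw [ENNReal.div_le_iff hkc (by simp), mul_comm, ← ENNReal.coe_mul]
  apply phiInv_le
  by_contra hcon
  rw [not_le] at hcon
  set u := k⁻¹ * σ with hu
  have ht1' : (t:ℝ≥0∞) ≤ 1 := by exact_mod_cast ht1
  have a1 : φ x (l * u) ≤ L * l * t := (hL x u l hl0 hl1).trans (by gcongr)
  have a2 : φ x (l * u) ≤ s := a1.trans (by
    calc (L:ℝ≥0∞) * l * t ≤ L * l * 1 := by gcongr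
      _ ≤ s := by rw [mul_one]; exact_mod_cast hls)
  have a1' : φ x (l * u) ≤ t := a1.trans (by
    have : (L:ℝ≥0∞) * l ≤ 1 := by exact_mod_cast hll.le
    calc (L:ℝ≥0∞) * l * t ≤ 1 * t := by gcongr
      _ = t := one_mul _)
  have a3 : φi (β * (l * u)) ≤ (1 + M) * t := by
    refine ((hx _).2 a2).trans ?_
    rw [add_mul, one_mul]
    gcongr
  have a4 : φi (μ * (β * (l * u))) ≤ Li * μ * ((1 + M) * t) := (hLi 0 _ μ hμ0 hμ1).trans (by gcongr)
  have e4 : (Li:ℝ≥0∞) * μ * ((1 + M) * t) = (Li * (1 + M) * μ : ℝ≥0) * t := by push_cast; ring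
  rw [e4] at a4
  have a5 : φi (μ * (β * (l * u))) ≤ s := a4.trans (by
    calc _ ≤ ((Li * (1 + M) * μ : ℝ≥0) : ℝ≥0∞) * 1 := by gcongr
      _ ≤ s := by rw [mul_one]; exact_mod_cast hμs)
  have a5' : φi (μ * (β * (l * u))) ≤ t := a4.trans (by
    have : ((Li * (1 + M) * μ : ℝ≥0) : ℝ≥0∞) ≤ 1 := by exact_mod_cast hμl.le
    calc _ ≤ (1:ℝ≥0∞) * t := by gcongr
      _ = t := one_mul _)
  have a6 : φ y (β * (μ * (β * (l * u)))) ≤ (1 + M) * t := by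
    refine ((hy _).1 a5).trans ?_
    rw [add_mul, one_mul]
    gcongr
  have a7 : φ y (ν * (β * (μ * (β * (l * u))))) ≤ L * ν * ((1 + M) * t) := (hL y _ ν hν0 hν1).trans (by gcongr)
  have e7 : (L:ℝ≥0∞) * ν * ((1 + M) * t) = (L * (1 + M) * ν * t : ℝ≥0) := by push_cast; ring
  have eσ : ν * (β * (μ * (β * (l * u)))) = σ := by
    rw [hu]
    calc _ = (ν * β * μ * β * l) * k⁻¹ * σ := by ring
      _ = σ := by rw [← hk, mul_inv_cancel₀ hk0.ne', one_mul]
  rw [e7, eσ] at a7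
  have a8 := hσ.trans a7
  have a9 : t ≤ L * (1 + M) * ν * t := by exact_mod_cast a8
  have a10 : L * (1 + M) * ν * t < 1 * t := mul_lt_mul_of_pos_right hνl ht0
  rw [one_mul] at a10
  exact absurd a9 (not_le.2 a10)

/-- rational cubes -/
noncomputable def ratCube {n : ℕ} (c : Fin n → ℚ) (r : {r : ℚ // 0 < r}) : Cube n :=
  ⟨WithLp.toLp 2 (fun i => (c i : ℝ)), (r.1 : ℝ), by exact_mod_cast r.2⟩

lemma exists_ratCube {n : ℕ} (Q : Cube n) : ∃ (c : Fin n → ℚ) (r : {r : ℚ // 0 < r}),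
    Q.set ⊆ (ratCube c r).set ∧ volume (ratCube c r).set ≤ ENNReal.ofReal (2 ^ n) * volume Q.set := by
  have hr := Q.r_pos
  obtain ⟨r', h1, h2⟩ := exists_rat_btwn (show 5 * Q.r / 4 < 2 * Q.r by linarith)
  have hr' : (0:ℝ) < r' := by linarith
  choose c hc1 hc2 using fun i => exists_rat_btwn (show Q.c i - Q.r / 4 < Q.c i + Q.r / 4 by linarith)
  refine ⟨c, ⟨r', by exact_mod_cast hr'⟩, ?_, ?_⟩
  · intro y hy i
    have := abs_le.1 (hy i)
    have a := hc1 i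
    have b := hc2 i
    simp only [ratCube]
    rw [abs_le]
    constructor <;> linarith
  · rw [Cube.volume_eq, Cube.volume_eq, ← ENNReal.ofReal_mul (by positivity), ← mul_pow]
    apply ENNReal.ofReal_le_ofReal
    simp only [ratCube]
    gcongr

/-- comparison for large levels -/
lemma comp_large {n : ℕ} {φ : RSp n → ℝ≥0 → ℝ≥0∞} (hφ : IsWeakPhi univ φ) {p : ℝ} (hp : 0 < p)
    (hinc : AInc p univ φ) (h1 : A1 φ) :
    ∃ K : ℝ≥0, ∃ N : Set (RSp n), volume N = 0 ∧ ∀ x ∉ N, ∀ y ∉ N, ∀ Q : Cube n, x ∈ Q.set → y ∈ Q.set →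
      ∀ t : ℝ≥0, 1 ≤ t → t * (ENNReal.ofReal (2 ^ n) * volume Q.set) ≤ 1 → phiInv φ x t ≤ K * phiInv φ y t := by
  obtain ⟨β, hβ, hβ1, hA⟩ := h1
  obtain ⟨D, hD1, hD⟩ := phiInv_up hφ hp hinc
  have key : ∀ᵐ x ∂(volume : Measure (RSp n)), ∀ (c : Fin n → ℚ) (r : {r : ℚ // 0 < r}) (k : ℕ),
      1 ≤ k → k * volume (ratCube c r).set ≤ 1 → x ∈ (ratCube c r).set →
      β * phiInv φ x k ≤ essInf (fun y => phiInv φ y k) (volume.restrict (ratCube c r).set) ∧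
      essInf (fun y => phiInv φ y k) (volume.restrict (ratCube c r).set) ≤ phiInv φ x k := by
    rw [ae_all_iff]; intro c
    rw [ae_all_iff]; intro r
    rw [ae_all_iff]; intro k
    by_cases hk1 : 1 ≤ k
    swap
    · exact Eventually.of_forall fun x h => absurd h hk1
    by_cases hk2 : k * volume (ratCube c r).set ≤ 1
    swap
    · exact Eventually.of_forall fun x _ h => absurd h hk2
    have hk1' : (1:ℝ≥0∞) ≤ k := by exact_mod_cast hk1
    have hv : volume (ratCube c r).set ≤ 1 := (le_mul_of_one_le_left zero_le hk1').trans hk2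
    have hk3 : (k:ℝ≥0∞) ≤ (volume (ratCube c r).set)⁻¹ := by
      rw [ENNReal.le_inv_iff_mul_le]; exact hk2
    have hQ := hA (ratCube c r) hv
    have e1 : ∀ᵐ x ∂(volume.restrict (ratCube c r).set),
        β * phiInv φ x k ≤ essInf (fun y => phiInv φ y k) (volume.restrict (ratCube c r).set) := by
      filter_upwards [hQ] with x hx
      refine le_essInf_of_ae_le _ ?_
      filter_upwards [hx] with y hy
      exact hy k hk1' hk3
    have e2 : ∀ᵐ x ∂(volume.restrict (ratCube c r).set),
        essInf (fun y => phiInv φ y k) (volume.restrict (ratCube c r).set) ≤ phiInv φ x k :=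
      ae_essInf_le
    rw [ae_restrict_iff'₀ (Cube.measurableSet _).nullMeasurableSet] at e1 e2
    filter_upwards [e1, e2] with x hx1 hx2 _ _ hxQ
    exact ⟨hx1 hxQ, hx2 hxQ⟩
  refine ⟨D * 2 ^ (1/p) * β⁻¹, {x | ¬ _}, key, fun x hx y hy Q hxQ hyQ t ht1 htQ => ?_⟩
  obtain ⟨c, r, hsub, hvol⟩ := exists_ratCube Q
  set k := ⌊t⌋₊ with hk
  have hk1 : 1 ≤ k := Nat.le_floor (by simpa using ht1)
  have hkt : (k:ℝ≥0) ≤ t := Nat.floor_le zero_le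
  have htk : t ≤ 2 * k := by
    have h3 := (Nat.lt_floor_add_one t).le
    have : (1:ℝ≥0) ≤ k := by exact_mod_cast hk1
    calc t ≤ k + 1 := h3
      _ ≤ k + k := by gcongr
      _ = _ := by ring
  have hkE : ((k:ℝ≥0):ℝ≥0∞) = (k:ℝ≥0∞) := by simp
  have hk2 : k * volume (ratCube c r).set ≤ 1 := by
    rw [← hkE]
    calc ((k:ℝ≥0):ℝ≥0∞) * volume (ratCube c r).set ≤ t * (ENNReal.ofReal (2 ^ n) * volume Q.set) := by
          gcongr
      _ ≤ 1 := htQ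
  have hx' := (not_not.1 hx) c r k hk1 hk2 (hsub hxQ)
  have hy' := (not_not.1 hy) c r k hk1 hk2 (hsub hyQ)
  have hb : (β:ℝ≥0∞) * phiInv φ x k ≤ phiInv φ y k := hx'.1.trans hy'.2
  have hβ' : (β:ℝ≥0∞) ≠ 0 := by exact_mod_cast hβ.ne'
  have hb2 : phiInv φ x k ≤ (β⁻¹ : ℝ≥0) * phiInv φ y k := by
    rw [ENNReal.coe_inv hβ.ne']
    calc phiInv φ x k = (β:ℝ≥0∞)⁻¹ * (β * phiInv φ x k) := by
          rw [← mul_assoc, ENNReal.inv_mul_cancel hβ' (by simp), one_mul]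
      _ ≤ _ := by gcongr
  have hkpos : (0:ℝ≥0) < k := by exact_mod_cast hk1
  have hr2 : t / (k:ℝ≥0) ≤ 2 := by rw [div_le_iff₀ hkpos]; exact htk
  calc phiInv φ x t ≤ D * ((t / (k:ℝ≥0) : ℝ≥0) : ℝ≥0∞) ^ (1 / p) * phiInv φ x (k:ℝ≥0) := hD x k t hkpos hkt
    _ ≤ D * ((2 : ℝ≥0) : ℝ≥0∞) ^ (1 / p) * ((β⁻¹ : ℝ≥0) * phiInv φ y (k:ℝ≥0)) := by
      rw [hkE]
      have : 0 ≤ 1 / p := by positivity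
      gcongr
    _ ≤ D * ((2 : ℝ≥0) : ℝ≥0∞) ^ (1 / p) * ((β⁻¹ : ℝ≥0) * phiInv φ y t) := by
      have := phiInv_mono φ y (ENNReal.coe_le_coe.2 hkt)
      gcongr
    _ = _ := by
      rw [ENNReal.coe_mul, ENNReal.coe_mul, ENNReal.coe_rpow_of_nonneg (2:ℝ≥0) (by positivity : 0 ≤ 1/p)]; ring

lemma comp_all {n : ℕ} {φ : RSp n → ℝ≥0 → ℝ≥0∞} (hφ : IsWeakPhi univ φ) {p : ℝ} (hp : 0 < p)
    (hinc : AInc p univ φ) (h1 : A1 φ) (h2 : A2 φ) {ε : ℝ≥0∞} (hε : 0 < ε) :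
    ∃ H : RSp n → ℝ≥0∞, Measurable H ∧ (∀ x, H x ≤ 1 / 2) ∧ ∫⁻ x, H x ≤ ε ∧
    ∃ K : ℝ≥0, 1 ≤ K ∧ ∃ N : Set (RSp n), volume N = 0 ∧ ∀ x ∉ N, ∀ y ∉ N, ∀ Q : Cube n, x ∈ Q.set → y ∈ Q.set →
      ∀ t : ℝ≥0, 0 < t → H x ≤ t → H y ≤ t → (t ≤ 1 ∨ t * (ENNReal.ofReal (2 ^ n) * volume Q.set) ≤ 1) →
        phiInv φ x t ≤ K * phiInv φ y t := by
  obtain ⟨H, hHm, hH2, hHi, K1, N1, hN1, hK1⟩ := comp_small hφ h2 hε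
  obtain ⟨K2, N2, hN2, hK2⟩ := comp_large hφ hp hinc h1
  refine ⟨H, hHm, hH2, hHi, max 1 (max K1 K2), le_max_left _ _, N1 ∪ N2, measure_union_null hN1 hN2, ?_⟩
  intro x hx y hy Q hxQ hyQ t ht hxt hyt hor
  rw [mem_union, not_or] at hx hy
  by_cases ht1 : t ≤ 1
  · refine (hK1 x hx.1 y hy.1 t ht ht1 hxt hyt).trans ?_
    gcongr
    exact (le_max_left _ _).trans (le_max_right _ _)
  · refine (hK2 x hx.2 y hy.2 Q hxQ hyQ t (not_le.1 ht1).le (hor.resolve_left ht1)).trans ?_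
    gcongr
    exact (le_max_right _ _).trans (le_max_right _ _)

open MeasureTheory NNReal ENNReal Filter Set

lemma holder_vol {n : ℕ} {s s' : ℝ} (hs : s'.HolderConjugate s) (Q : Cube n) {u g : RSp n → ℝ≥0∞}
    (hu : AEMeasurable u (volume.restrict Q.set)) (hg : AEMeasurable g (volume.restrict Q.set)) {c1 c2 : ℝ≥0∞}
    (h1 : ∫⁻ x in Q.set, u x ^ s' ≤ c1 * volume Q.set) (h2 : ∫⁻ x in Q.set, g x ^ s ≤ c2 * volume Q.set) :
    ∫⁻ x in Q.set, u x * g x ≤ c1 ^ (1/s') * c2 ^ (1/s) * volume Q.set := by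
  have h0 : 0 ≤ 1 / s' := by have := hs.pos; positivity
  have h0' : 0 ≤ 1 / s := by have := hs.symm.pos; positivity
  calc ∫⁻ x in Q.set, u x * g x ≤ (∫⁻ x in Q.set, u x ^ s') ^ (1/s') * (∫⁻ x in Q.set, g x ^ s) ^ (1/s) :=
        ENNReal.lintegral_mul_le_Lp_mul_Lq _ hs hu hg
    _ ≤ (c1 * volume Q.set) ^ (1/s') * (c2 * volume Q.set) ^ (1/s) := by gcongr
    _ = c1 ^ (1/s') * c2 ^ (1/s) * (volume Q.set ^ (1/s') * volume Q.set ^ (1/s)) := by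
        rw [ENNReal.mul_rpow_of_nonneg _ _ h0, ENNReal.mul_rpow_of_nonneg _ _ h0']; ring
    _ = _ := by
        rw [← ENNReal.rpow_add _ _ Q.volume_ne_zero Q.volume_ne_top, one_div, one_div, hs.inv_add_inv_eq_one,
          ENNReal.rpow_one]

lemma avg_pow_le {n : ℕ} {P : ℝ} (hP : 1 < P) (Q : Cube n) {G : RSp n → ℝ≥0∞} (hG : Measurable G) :
    ((volume Q.set)⁻¹ * ∫⁻ x in Q.set, G x) ^ P ≤ (volume Q.set)⁻¹ * ∫⁻ x in Q.set, G x ^ P := by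
  have hv := ENNReal.inv_mul_cancel Q.volume_ne_zero Q.volume_ne_top
  have hc := (Real.HolderConjugate.conjExponent hP)
  have := holder_vol hc.symm Q (u := fun _ => 1) (g := G) (c1 := 1)
    (c2 := (volume Q.set)⁻¹ * ∫⁻ x in Q.set, G x ^ P) aemeasurable_const hG.aemeasurable (by simp) (by
      rw [mul_comm, ← mul_assoc, mul_comm (volume Q.set), hv, one_mul])
  simp only [one_mul, ENNReal.one_rpow] at this
  have h2 : (volume Q.set)⁻¹ * ∫⁻ x in Q.set, G x ≤ ((volume Q.set)⁻¹ * ∫⁻ x in Q.set, G x ^ P) ^ (1/P) := by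
    calc _ ≤ (volume Q.set)⁻¹ * (((volume Q.set)⁻¹ * ∫⁻ x in Q.set, G x ^ P) ^ (1/P) * volume Q.set) := by gcongr
      _ = ((volume Q.set)⁻¹ * volume Q.set) * ((volume Q.set)⁻¹ * ∫⁻ x in Q.set, G x ^ P) ^ (1/P) := by ring
      _ = _ := by rw [hv, one_mul]
  calc _ ≤ (((volume Q.set)⁻¹ * ∫⁻ x in Q.set, G x ^ P) ^ (1/P)) ^ P := by
        apply ENNReal.rpow_le_rpow h2 (by linarith)
    _ = _ := by rw [← ENNReal.rpow_mul, one_div, inv_mul_cancel₀ (by linarith), ENNReal.rpow_one]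

lemma level_cond {a h : ℝ≥0} {W : ℝ≥0∞} (hh : h ≤ 1/2) (ha : a * W ≤ 1/2) :
    (a + h ≤ 1 ∨ ((a + h : ℝ≥0) : ℝ≥0∞) * W ≤ 1) := by
  by_cases h1 : a ≤ 1/2
  · left
    calc a + h ≤ 1/2 + 1/2 := add_le_add h1 hh
      _ = 1 := by norm_num
  · right
    have : h ≤ a := hh.trans (not_le.1 h1).le
    calc ((a + h : ℝ≥0) : ℝ≥0∞) * W ≤ (a + a : ℝ≥0) * W := by gcongr
      _ = a * W + a * W := by push_cast; ring
      _ ≤ 1/2 + 1/2 := add_le_add ha ha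
      _ = 1 := by rw [ENNReal.add_halves]

section
variable {n : ℕ} {φ ψ : RSp n → ℝ≥0 → ℝ≥0∞}

lemma cube_pt (hφ : IsWeakPhi univ φ) {p : ℝ} (hp : 0 < p) {D K : ℝ≥0}
    (hD : ∀ (x : RSp n) (t t' : ℝ≥0), 0 < t → t ≤ t' →
      phiInv φ x t' ≤ D * ((t' / t : ℝ≥0) : ℝ≥0∞) ^ (1 / p) * phiInv φ x t)
    {a F h σ : ℝ≥0} (ha : 0 < a) {y z : RSp n} (hF : φ y σ = F)
    (hK : phiInv φ y (a + h : ℝ≥0) ≤ K * phiInv φ z (a + h : ℝ≥0)) :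
    (σ : ℝ≥0∞) ≤ D * D * K * phiInv φ z a * (((F:ℝ≥0∞) + h) / a + 1) ^ (1 / p) := by
  have hp' : 0 ≤ 1 / p := by positivity
  have hah : 0 < a + h := by positivity
  have h1 : (σ:ℝ≥0∞) ≤ phiInv φ y (F + h + a : ℝ≥0) := by
    apply le_phiInv_of_lt hφ
    rw [hF]
    have : F < F + h + a := by
      calc F ≤ F + h := le_self_add
        _ < _ := lt_add_of_pos_right _ ha
    exact_mod_cast this
  have h2 := hD y (a + h) (F + h + a) hah (by rw [add_comm a h, add_assoc]; exact le_add_self)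
  have h3 := hD z a (a + h) ha le_self_add
  have e : (((F + h + a) / (a + h) : ℝ≥0) : ℝ≥0∞) ^ (1/p) * (((a + h) / a : ℝ≥0) : ℝ≥0∞) ^ (1/p) =
      (((F:ℝ≥0∞) + h) / a + 1) ^ (1 / p) := by
    rw [← ENNReal.mul_rpow_of_nonneg _ _ hp', ← ENNReal.coe_mul]
    congr 1
    have : (F + h + a) / (a + h) * ((a + h) / a) = (F + h) / a + 1 := by field_simp
    rw [this]
    push_cast
    rw [ENNReal.coe_div ha.ne']
    push_cast; rfl
  calc (σ:ℝ≥0∞) ≤ _ := h1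
    _ ≤ _ := h2
    _ ≤ D * (((F + h + a) / (a + h) : ℝ≥0) : ℝ≥0∞) ^ (1/p) *
        (K * (D * (((a + h) / a : ℝ≥0) : ℝ≥0∞) ^ (1/p) * phiInv φ z a)) :=
      mul_le_mul_right (hK.trans (mul_le_mul_right h3 _)) _
    _ = D * D * K * phiInv φ z a * ((((F + h + a) / (a + h) : ℝ≥0) : ℝ≥0∞) ^ (1/p) *
        (((a + h) / a : ℝ≥0) : ℝ≥0∞) ^ (1/p)) := by ring
    _ = _ := by rw [e]

lemma cube_x {r γ : ℝ} (hγ : 0 ≤ γ) (hr : γ < r) {D K c₂ : ℝ≥0}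
    (hD : ∀ (x : RSp n) (t t' : ℝ≥0), 0 < t → t ≤ t' →
      phiInv φ x t ≤ D * ((t / t' : ℝ≥0) : ℝ≥0∞) ^ r * phiInv φ x t')
    (hψ : ∀ x : RSp n, ∀ t : ℝ≥0, 0 < t →
      phiInv φ x t ≤ (c₂ : ℝ≥0∞) * ((t : ℝ≥0∞) ^ γ * phiInv ψ x t))
    {a h B : ℝ≥0} (ha : 0 < a) (hB : 1 ≤ B) {x z : RSp n}
    (hK : phiInv φ z (a + h : ℝ≥0) ≤ K * phiInv φ x (a + h : ℝ≥0)) :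
    (B : ℝ≥0∞) * (a:ℝ≥0∞) ^ (-γ) * phiInv φ z a ≤
      D * D * K * c₂ * phiInv ψ x (B ^ (1 / (r - γ)) * a + h : ℝ≥0) := by
  have hδ : 0 < r - γ := by linarith
  have hr0 : 0 < r := by linarith
  set t1 := a + h with ht1
  set Bm := B ^ (1 / (r - γ)) with hBm
  have hBm1 : 1 ≤ Bm := NNReal.one_le_rpow hB (by positivity)
  set t := Bm * a + h with ht
  have h1p : 0 < t1 := by positivity
  have h1t : t1 ≤ t := by
    rw [ht, ht1]; gcongr; exact le_mul_of_one_le_left zero_le hBm1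
  have htp : 0 < t := h1p.trans_le h1t
  have s1 := hD z a t1 ha le_self_add
  have s2 := hD x t1 t h1p h1t
  have s3 := hψ x t htp
  have e : ((a / t1 : ℝ≥0) : ℝ≥0∞) ^ r * ((t1 / t : ℝ≥0) : ℝ≥0∞) ^ r = ((a / t : ℝ≥0) : ℝ≥0∞) ^ r := by
    rw [← ENNReal.mul_rpow_of_nonneg _ _ hr0.le, ← ENNReal.coe_mul]
    congr 2; field_simp
  have e2 : (B : ℝ≥0∞) * (a:ℝ≥0∞) ^ (-γ) * (((a / t : ℝ≥0) : ℝ≥0∞) ^ r * (t : ℝ≥0∞) ^ γ) ≤ 1 := by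
    have ha' : (a:ℝ≥0) ≠ 0 := ha.ne'
    rw [← ENNReal.coe_rpow_of_ne_zero ha', ← ENNReal.coe_rpow_of_nonneg _ hr0.le, ← ENNReal.coe_rpow_of_nonneg _ hγ]
    norm_cast
    have e3 : a ^ (-γ) * ((a / t) ^ r * t ^ γ) = (a / t) ^ (r - γ) := by
      rw [NNReal.rpow_sub (by positivity), NNReal.rpow_neg, NNReal.div_rpow a t γ]
      have : 0 < a ^ γ := NNReal.rpow_pos ha
      have : 0 < t ^ γ := NNReal.rpow_pos htp
      field_simp
    rw [mul_assoc, e3]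
    have e4 : a / t ≤ Bm⁻¹ := by
      rw [div_le_iff₀ htp, ← div_eq_inv_mul, le_div_iff₀ (by positivity), mul_comm]
      exact le_self_add
    calc B * (a / t) ^ (r - γ) ≤ B * (Bm⁻¹) ^ (r - γ) := by gcongr
      _ = 1 := by
        rw [NNReal.inv_rpow, hBm, ← NNReal.rpow_mul, one_div, inv_mul_cancel₀ hδ.ne', NNReal.rpow_one,
          mul_inv_cancel₀ (by positivity)]
  calc (B : ℝ≥0∞) * (a:ℝ≥0∞) ^ (-γ) * phiInv φ z a
      ≤ B * (a:ℝ≥0∞) ^ (-γ) * (D * ((a / t1 : ℝ≥0) : ℝ≥0∞) ^ r * (K * (D * ((t1 / t : ℝ≥0) : ℝ≥0∞) ^ r *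
        (c₂ * ((t : ℝ≥0∞) ^ γ * phiInv ψ x t))))) :=
        mul_le_mul_right (s1.trans (mul_le_mul_right (hK.trans (mul_le_mul_right
          (s2.trans (mul_le_mul_right s3 _)) _)) _)) _
    _ = D * D * K * c₂ * phiInv ψ x t * (B * (a:ℝ≥0∞) ^ (-γ) * ((((a / t1 : ℝ≥0) : ℝ≥0∞) ^ r *
        ((t1 / t : ℝ≥0) : ℝ≥0∞) ^ r) * (t : ℝ≥0∞) ^ γ)) := by ring
    _ ≤ D * D * K * c₂ * phiInv ψ x t * 1 := by rw [e]; exact mul_le_mul_right e2 _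
    _ = _ := mul_one _

lemma phi_pos (hφ : IsWeakPhi univ φ) {p : ℝ} {L : ℝ≥0} (hL1 : 1 ≤ L)
    (hL : ∀ x ∈ (univ : Set (RSp n)), ∀ s t : ℝ≥0, 0 < s → s < t →
    φ x t / (t : ℝ≥0∞) ^ p ≤ (L : ℝ≥0∞) * (φ x s / (s : ℝ≥0∞) ^ p)) (hp : 0 < p) (x : RSp n) (s : ℝ≥0)
    (h : φ x s = 0) : s = 0 := by
  by_contra hs
  have hs0 : 0 < s := pos_iff_ne_zero.2 hs
  have := (hφ.lim_top x (mem_univ x)).eventually (lt_mem_nhds (show (0:ℝ≥0∞) < ∞ by simp))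
  obtain ⟨u, hu⟩ := this.exists
  have h1 := adec_mul hφ hL1 hL hp x s (max 1 (u / s)) (le_max_left _ _)
  rw [h, mul_zero] at h1
  have h2 : u ≤ max 1 (u / s) * s := by
    calc u = u / s * s := by rw [div_mul_cancel₀ _ hs]
      _ ≤ _ := by gcongr; exact le_max_right _ _
  exact absurd ((hφ.mono x (mem_univ x) h2).trans h1) (not_le.2 hu)

lemma phiE_le_of_le_phiInv (hψ : IsWeakPhi univ ψ) {C : ℝ≥0} (hC : 0 < C) {x : RSp n} {g T : ℝ≥0∞}
    (h : g ≤ C * phiInv ψ x T) : phiE ψ x (g / ((2 * C : ℝ≥0) : ℝ≥0∞)) ≤ T := by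
  by_cases hT : T = ∞
  · simp [hT]
  have hC' : (C:ℝ≥0∞) ≠ 0 := by exact_mod_cast hC.ne'
  refine iSup₂_le fun s hs => ?_
  have h1 : (s:ℝ≥0∞) ≤ phiInv ψ x T / 2 := by
    refine hs.trans ?_
    rw [ENNReal.div_le_iff (by exact_mod_cast (by positivity : (2 * C) ≠ 0)) ENNReal.coe_ne_top]
    refine h.trans (le_of_eq ?_)
    push_cast
    rw [← mul_assoc, ENNReal.div_mul_cancel (by norm_num) (by simp), mul_comm]
  by_cases hT0 : T = 0
  · have : phiInv ψ x T = 0 := by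
      have := phiInv_le (φ := ψ) (x := x) (t := T) (s := 0) (by rw [hT0]; exact zero_le)
      simpa using this
    rw [this] at h1
    have hs0 : s = 0 := by simpa using h1
    rw [hs0, hψ.zero x (mem_univ x)]; exact zero_le
  · apply (lt_of_lt_phiInv _).le
    refine h1.trans_lt (ENNReal.half_lt_self ?_ ?_)
    · exact (phiInv_pos hψ x (pos_iff_ne_zero.2 hT0)).ne'
    · exact (phiInv_lt_top hψ x (lt_top_iff_ne_top.2 hT)).ne
end

open MeasureTheory NNReal ENNReal Filter Set

section
variable {n : ℕ} {φ ψ : RSp n → ℝ≥0 → ℝ≥0∞}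

lemma aemeas_phi (hφ : IsWeakPhi univ φ) {f : RSp n → ℝ} (hf : AEMeasurable f volume) :
    AEMeasurable (fun x => φ x ‖f x‖₊) volume := by
  have := hφ.meas (fun x => ‖hf.mk f x‖₊) hf.measurable_mk.nnnorm
  rw [Measure.restrict_univ] at this
  refine this.congr ?_
  filter_upwards [hf.ae_eq_mk] with x hx
  rw [hx]

lemma exists_good_pt (Q : Cube n) {G : RSp n → ℝ≥0∞} (hG : Measurable G) {N : Set (RSp n)}
    (hN : volume N = 0) : ∃ z ∈ Q.set, z ∉ N ∧ G z ≤ (volume Q.set)⁻¹ * ∫⁻ x in Q.set, G x := by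
  have h := measure_le_setLAverage_pos (μ := volume) (s := Q.set) (f := G) Q.volume_ne_zero Q.volume_ne_top
    hG.aemeasurable
  rw [← measure_sdiff_null hN] at h
  obtain ⟨z, ⟨hz1, hz2⟩, hz3⟩ := nonempty_of_measure_ne_zero h.ne'
  refine ⟨z, hz1, hz3, hz2.trans (le_of_eq ?_)⟩
  rw [setLAverage_eq, div_eq_mul_inv, mul_comm]

lemma phiE_mul (hψ : IsWeakPhi univ ψ) : ∃ L : ℝ≥0, 1 ≤ L ∧ ∀ (x : RSp n) (t : ℝ≥0∞) (c : ℝ≥0), 0 < c → c ≤ 1 →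
    phiE ψ x (c * t) ≤ L * c * phiE ψ x t := by
  obtain ⟨L, hL1, hL⟩ := almost_inc_mul hψ
  refine ⟨L, hL1, fun x t c hc0 hc1 => iSup₂_le fun s hs => ?_⟩
  have h1 : ((c⁻¹ * s : ℝ≥0) : ℝ≥0∞) ≤ t := by
    rw [ENNReal.coe_mul, ENNReal.coe_inv hc0.ne']
    have : (c:ℝ≥0∞) ≠ 0 := by exact_mod_cast hc0.ne'
    calc (c:ℝ≥0∞)⁻¹ * s ≤ (c:ℝ≥0∞)⁻¹ * (c * t) := by gcongr
      _ = t := by rw [← mul_assoc, ENNReal.inv_mul_cancel this (by simp), one_mul]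
  have h2 := hL x (c⁻¹ * s) c hc0 hc1
  rw [mul_inv_cancel_left₀ hc0.ne'] at h2
  refine h2.trans ?_
  gcongr
  exact le_iSup₂ (f := fun (s : ℝ≥0) (_ : (s:ℝ≥0∞) ≤ t) => ψ x s) _ h1

set_option maxHeartbeats 2000000 in
/-- The main modular estimate. -/
lemma suff_modular (hn : 0 < n) {p r α : ℝ} (hp : 1 < p) (hγ : 0 ≤ α / n) (hr : α / n < r)
    (hφ : IsWeakPhi univ φ) (hψ : IsWeakPhi univ ψ) (hinv : FracInvRel α φ ψ)
    (ha1 : A1 φ) (ha2 : A2 φ) (hainc : AInc p univ φ) (hadec : ADec (1 / r) univ φ) :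
    ∃ ε : ℝ≥0, 0 < ε ∧ ∃ C : ℝ≥0, 0 < C ∧ ∀ b : RSp n → ℝ, LocallyIntegrable b volume → bmoNorm b ≤ 1 →
      ∀ f : RSp n → ℝ, AEMeasurable f volume → ∫⁻ x, φ x ‖f x‖₊ ≤ ε →
        ∫⁻ x, phiE ψ x (fracMaximalComm α b f x / C) ≤ 1 := by
  set γ := α / (n:ℝ) with hγdef
  have hr0 : 0 < r := by linarith
  have hp0 : 0 < p := by linarith
  have hδ : 0 < r - γ := by linarith
  set P := Real.sqrt p with hPdef
  have hP : 1 < P := by rw [hPdef, Real.lt_sqrt (by norm_num)]; simpa using hp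
  have hP0 : 0 < P := by linarith
  have hPP : P * P = p := Real.mul_self_sqrt hp0.le
  have hconj := Real.HolderConjugate.conjExponent hP
  set s' := P.conjExponent with hs'
  have hs'0 : 0 < s' := hconj.symm.pos
  set m := 1 / (r - γ) with hm
  have hm0 : 0 ≤ m := by positivity
  set E : ℝ≥0 := 2 ^ n with hE
  have hE0 : 0 < E := by positivity
  have hEof : ENNReal.ofReal (2 ^ n) = E := by
    rw [hE, ENNReal.ofReal]; congr 1
    rw [Real.toNNReal_pow (by norm_num)]; simp
  set ε : ℝ≥0 := (4 * E)⁻¹ with hε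
  have hε0 : 0 < ε := by positivity
  have hεE : 2 * ε * E = 1 / 2 := by rw [hε]; field_simp; norm_num
  obtain ⟨CS, hCS⟩ := maximal_weighted hn hP hm0
  obtain ⟨CJ, hCJ⟩ := JN_moment n s' hs'0.le
  obtain ⟨H, hHm, hH2, hHi, K, hK1, N, hN, hK⟩ := comp_all hφ hp0 hainc ha1 ha2 (ε := ε) (by exact_mod_cast hε0)
  obtain ⟨D1, hD11, hD1⟩ := phiInv_up hφ hp0 hainc
  obtain ⟨D2, hD21, hD2⟩ := phiInv_down hφ hr0 hadec
  obtain ⟨c₁, c₂, hc₁, hc⟩ := hinv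
  obtain ⟨Ld, hLd1, hLd⟩ := hadec
  obtain ⟨Lψ, hLψ1, hLψ⟩ := phiE_mul hψ
  set KJ : ℝ≥0 := CJ ^ (1/s') * 2 ^ (1/P) with hKJ
  set C0 : ℝ≥0 := D1 * D1 * K * KJ * (D2 * D2 * K * c₂) + 1 with hC0
  have hC0p : 0 < C0 := by positivity
  set C' : ℝ≥0 := CS * (2 * ε) + ε with hC'
  obtain ⟨κ, hκ0, hκ1, -, hκ⟩ := exists_small (Lψ * C') 1 one_pos
  refine ⟨ε, hε0, 2 * C0 / κ, by positivity, fun b hb hb1 f hf hfi => ?_⟩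
  have hFm := aemeas_phi hφ hf
  set F := hFm.mk _ with hF
  have hFmeas : Measurable F := hFm.measurable_mk
  have hFe : ∀ᵐ y, φ y ‖f y‖₊ = F y := hFm.ae_eq_mk
  have hFi : ∫⁻ y, F y ≤ ε := by rw [← lintegral_congr_ae hFe]; exact hfi
  set G : RSp n → ℝ≥0∞ := fun y => (F y + H y) ^ (1/P) with hG
  have hGm : Measurable G := (hFmeas.add hHm).pow_const _
  have hGP : ∀ y, G y ^ P = F y + H y := by
    intro y; simp only [hG]
    rw [← ENNReal.rpow_mul, one_div, inv_mul_cancel₀ hP0.ne', ENNReal.rpow_one]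
  have hGi : ∫⁻ y, G y ^ P ≤ (2 * ε : ℝ≥0) := by
    simp_rw [hGP]
    rw [lintegral_add_left hFmeas]
    calc _ ≤ (ε:ℝ≥0∞) + ε := add_le_add hFi hHi
      _ = _ := by push_cast; ring
  obtain ⟨S, hSm, hS, hSi⟩ := hCS b hb hb1 G hGm (ne_top_of_le_ne_top ENNReal.coe_ne_top hGi)
  have hbm : AEMeasurable b volume := hb.aestronglyMeasurable.aemeasurable
  have main : ∀ᵐ x, phiE ψ x (fracMaximalComm α b f x / ((2 * C0 : ℝ≥0) : ℝ≥0∞)) ≤ S x + H x := by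
    filter_upwards [hS, measure_eq_zero_iff_ae_notMem.1 hN] with x hSx hxN
    apply phiE_le_of_le_phiInv hψ hC0p
    refine iSup₂_le fun Q hxQ => ?_
    have hv0 := Q.volume_ne_zero
    have hvt := Q.volume_ne_top
    have hvv := ENNReal.inv_mul_cancel hv0 hvt
    set V := volume Q.set with hV
    set A := V⁻¹ * ∫⁻ y in Q.set, G y with hA
    have hAint : ∫⁻ y in Q.set, G y = A * V := by
      rw [hA, mul_comm, ← mul_assoc, mul_comm V, hvv, one_mul]
    by_cases hA0 : A = 0
    · have h0 : ∫⁻ y in Q.set, G y = 0 := by rw [hAint, hA0, zero_mul]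
      rw [lintegral_eq_zero_iff hGm] at h0
      have h1 : ∫⁻ y in Q.set, (‖b x - b y‖₊ : ℝ≥0∞) * ‖f y‖₊ = 0 := by
        rw [← lintegral_zero (μ := volume.restrict Q.set)]
        apply lintegral_congr_ae
        filter_upwards [h0, ae_restrict_of_ae hFe] with y hy1 hy2
        have : F y + H y = 0 := by
          rw [← hGP, hy1]; simp [hP0]
        have h3 : φ y ‖f y‖₊ = 0 := by rw [hy2]; exact (add_eq_zero.1 this).1
        rw [phi_pos hφ hLd1 hLd (by positivity) y _ h3]; simp
      rw [h1, mul_zero]; exact zero_le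
    have hAPle : A ^ P ≤ V⁻¹ * (2 * ε : ℝ≥0) := by
      refine (avg_pow_le hP Q hGm).trans ?_
      gcongr
      exact (setLIntegral_le_lintegral _ _).trans hGi
    have hAPt : A ^ P ≠ ∞ := ne_top_of_le_ne_top (ENNReal.mul_ne_top (by simp [hv0]) ENNReal.coe_ne_top) hAPle
    have hAt : A ≠ ∞ := by
      intro h; rw [h, ENNReal.top_rpow_of_pos hP0] at hAPt; exact hAPt rfl
    obtain ⟨a, ha⟩ : ∃ a : ℝ≥0, (a:ℝ≥0∞) = A ^ P := ⟨_, ENNReal.coe_toNNReal hAPt⟩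
    have ha0 : 0 < a := by
      have : 0 < A ^ P := ENNReal.rpow_pos (pos_iff_ne_zero.2 hA0) hAt
      rw [← ha] at this; exact_mod_cast this
    have haE : (a:ℝ≥0∞) * (ENNReal.ofReal (2 ^ n) * V) ≤ 1/2 := by
      rw [ha, hEof]
      calc A ^ P * (E * V) ≤ V⁻¹ * (2 * ε : ℝ≥0) * (E * V) := by gcongr
        _ = (V⁻¹ * V) * (2 * ε * E : ℝ≥0) := by push_cast; ring
        _ = 1/2 := by rw [hvv, hεE, one_mul]; simp
    have haA : (a:ℝ≥0∞) ^ (1/P) = A := by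
      rw [ha, ← ENNReal.rpow_mul, mul_one_div_cancel hP0.ne', ENNReal.rpow_one]
    obtain ⟨z, hzQ, hzN, hz⟩ := exists_good_pt Q hGm hN
    have hz' : H z ≤ a := by
      rw [ha]
      refine le_trans ?_ (ENNReal.rpow_le_rpow hz hP0.le)
      rw [hGP]; exact le_add_self
    have hHnn : ∀ y, ∃ h : ℝ≥0, (h:ℝ≥0∞) = H y ∧ h ≤ 1/2 := by
      intro y
      have hne : H y ≠ ∞ := ne_top_of_le_ne_top (by simp) (hH2 y)
      refine ⟨_, ENNReal.coe_toNNReal hne, ?_⟩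
      have := hH2 y
      rw [← ENNReal.coe_toNNReal hne] at this
      rw [← ENNReal.coe_le_coe]
      simpa using this
    have hcomp : ∀ y1 ∉ N, ∀ y2 ∉ N, y1 ∈ Q.set → y2 ∈ Q.set → ∀ h : ℝ≥0, h ≤ 1/2 →
        H y1 ≤ a + h → H y2 ≤ a + h → phiInv φ y1 (a + h : ℝ≥0) ≤ K * phiInv φ y2 (a + h : ℝ≥0) := by
      intro y1 h1 y2 h2 h3 h4 h hh h5 h6
      exact hK y1 h1 y2 h2 Q h3 h4 (a + h) (by positivity) (by exact_mod_cast h5) (by exact_mod_cast h6)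
        (level_cond hh haE)
    -- the point x
    obtain ⟨hx, hxH, hx2⟩ := hHnn x
    set B : ℝ≥0 := 1 + ‖b x - cubeAvg Q b‖₊ with hB
    have hB1 : 1 ≤ B := le_self_add
    have e5 := cube_x hγ hr hD2 (fun x t ht => (hc x t ht).2) ha0 hB1
      (hcomp z hzN x hxN hzQ hxQ hx hx2 (hz'.trans le_self_add) (by rw [← hxH]; exact le_add_self))
    have e6 : phiInv ψ x (B ^ (1 / (r - γ)) * a + hx : ℝ≥0) ≤ phiInv ψ x (S x + H x) := by
      apply phiInv_mono
      push_cast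
      rw [hxH]
      gcongr
      refine le_trans (le_of_eq ?_) (hSx Q hxQ)
      rw [← ha]
      congr 1
      rw [ENNReal.coe_rpow_of_nonneg _ hm0, hB]
      rw [← ENNReal.ofReal_rpow_of_nonneg (by positivity) hm0]
      congr 1
      rw [ENNReal.ofReal_add (by norm_num) (abs_nonneg _)]
      push_cast
      rw [ENNReal.ofReal_one, ← Real.norm_eq_abs, ofReal_norm_eq_enorm, enorm_eq_nnnorm]
    -- the integral
    set u : RSp n → ℝ≥0∞ := fun y => ENNReal.ofReal (1 + |b y - cubeAvg Q b|) with hu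
    set g : RSp n → ℝ≥0∞ := fun y => ((F y + H y) / a + 1) ^ (1/p) with hg
    have hum : AEMeasurable u (volume.restrict Q.set) := by
      have : AEMeasurable u volume :=
        ((hbm.sub_const _).norm.const_add 1).ennreal_ofReal
      exact this.restrict
    have hgm : Measurable g := (((hFmeas.add hHm).div_const _).add_const _).pow_const _
    have i1 : ∫⁻ y in Q.set, u y ^ s' ≤ CJ * V := by
      refine le_trans (le_of_eq ?_) (hCJ b hb hb1 Q)
      apply lintegral_congr fun y => ?_
      rw [hu]; exact ENNReal.ofReal_rpow_of_nonneg (by positivity) hs'0.le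
    have i2 : ∫⁻ y in Q.set, g y ^ P ≤ 2 * V := by
      calc ∫⁻ y in Q.set, g y ^ P ≤ ∫⁻ y in Q.set, (G y / A + 1) := by
            refine lintegral_mono fun y => ?_
            simp only [hg]
            rw [← ENNReal.rpow_mul]
            have : 1 / p * P = 1 / P := by rw [← hPP]; field_simp
            rw [this]
            refine (ENNReal.rpow_add_le_add_rpow _ _ (by positivity) ?_).trans (le_of_eq ?_)
            · rw [div_le_one hP0]; exact hP.le
            · rw [ENNReal.div_rpow_of_nonneg _ _ (by positivity), haA, ENNReal.one_rpow]
        _ = (∫⁻ y in Q.set, G y) / A + V := by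
            rw [lintegral_add_right _ measurable_const]
            simp only [lintegral_const, Measure.restrict_apply, MeasurableSet.univ, univ_inter, one_mul]
            congr 1
            simp_rw [div_eq_mul_inv]
            rw [lintegral_mul_const _ hGm]
        _ = 2 * V := by
            rw [hAint, mul_comm, ENNReal.mul_div_cancel_right hA0 hAt, two_mul]
    have i3 := holder_vol hconj.symm Q hum hgm.aemeasurable i1 i2
    have i3' : ∫⁻ y in Q.set, u y * g y ≤ KJ * V := by
      refine i3.trans (le_of_eq ?_)
      rw [hKJ, ENNReal.coe_mul, ENNReal.coe_rpow_of_nonneg _ (by positivity),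
        ENNReal.coe_rpow_of_nonneg _ (by positivity)]
      rfl
    have i4 : ∫⁻ y in Q.set, (‖b x - b y‖₊ : ℝ≥0∞) * ‖f y‖₊ ≤
        (D1 * D1 * K * phiInv φ z a * B) * (KJ * V) := by
      calc _ ≤ ∫⁻ y in Q.set, (D1 * D1 * K * phiInv φ z a * B) * (u y * g y) := by
            apply lintegral_mono_ae
            filter_upwards [ae_restrict_of_ae hFe, ae_restrict_of_ae (measure_eq_zero_iff_ae_notMem.1 hN),
              ae_restrict_mem Q.measurableSet] with y hy1 hyN hyQ
            obtain ⟨hy, hyH, hy2⟩ := hHnn y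
            have hFt : F y ≠ ∞ := by rw [← hy1]; exact phi_ne_top hφ hLd1 hLd (by positivity) y _
            obtain ⟨Fy, hFy⟩ : ∃ Fy : ℝ≥0, (Fy:ℝ≥0∞) = F y := ⟨_, ENNReal.coe_toNNReal hFt⟩
            have j1 := cube_pt hφ hp0 hD1 ha0 (hy1.trans hFy.symm)
              (hcomp y hyN z hzN hyQ hzQ hy hy2 (by rw [← hyH]; exact le_add_self) (hz'.trans le_self_add))
            rw [hFy, hyH] at j1
            have j2 : (‖b x - b y‖₊ : ℝ≥0∞) ≤ B * u y := by
              have : ‖b x - b y‖₊ ≤ B * Real.toNNReal (1 + |b y - cubeAvg Q b|) := by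
                rw [← NNReal.coe_le_coe]
                rw [hB]
                push_cast
                rw [Real.coe_toNNReal _ (by positivity), Real.norm_eq_abs, Real.norm_eq_abs]
                have : |b x - b y| ≤ |b x - cubeAvg Q b| + |b y - cubeAvg Q b| := by
                  calc |b x - b y| = |(b x - cubeAvg Q b) - (b y - cubeAvg Q b)| := by ring_nf
                    _ ≤ _ := abs_sub _ _
                nlinarith [abs_nonneg (b x - cubeAvg Q b), abs_nonneg (b y - cubeAvg Q b),
                  mul_nonneg (abs_nonneg (b x - cubeAvg Q b)) (abs_nonneg (b y - cubeAvg Q b))]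
              calc (‖b x - b y‖₊ : ℝ≥0∞) ≤ ((B * Real.toNNReal (1 + |b y - cubeAvg Q b|) : ℝ≥0) : ℝ≥0∞) :=
                    ENNReal.coe_le_coe.2 this
                _ = _ := by rw [ENNReal.coe_mul]; rfl
            calc _ ≤ (B * u y) * (D1 * D1 * K * phiInv φ z a * g y) := mul_le_mul' j2 j1
              _ = _ := by ring
        _ = (D1 * D1 * K * phiInv φ z a * B) * ∫⁻ y in Q.set, u y * g y :=
            lintegral_const_mul'' _ (hum.mul hgm.aemeasurable)
        _ ≤ _ := by gcongr
    have hVγ : V ^ γ ≤ (a:ℝ≥0∞) ^ (-γ) := by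
      rw [ENNReal.rpow_neg, ← ENNReal.inv_rpow]
      refine ENNReal.rpow_le_rpow ?_ hγ
      rw [ENNReal.le_inv_iff_mul_le]
      calc V * a = a * (1 * V) := by ring
        _ ≤ a * (ENNReal.ofReal (2 ^ n) * V) := by
          gcongr
          rw [hEof, hE]
          exact_mod_cast one_le_pow₀ (by norm_num : (1:ℝ≥0) ≤ 2)
        _ ≤ 1/2 := haE
        _ ≤ 1 := by simp
    calc V ^ (γ - 1) * ∫⁻ y in Q.set, (‖b x - b y‖₊ : ℝ≥0∞) * ‖f y‖₊
        ≤ V ^ (γ - 1) * ((D1 * D1 * K * phiInv φ z a * B) * (KJ * V)) := by gcongr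
      _ = D1 * D1 * K * KJ * (B * (V ^ (γ - 1) * V) * phiInv φ z a) := by ring
      _ = D1 * D1 * K * KJ * (B * V ^ γ * phiInv φ z a) := by
          congr 3
          conv_lhs => rw [← ENNReal.rpow_one V, ← ENNReal.rpow_mul, ← ENNReal.rpow_add _ _ hv0 hvt]
          congr 2; ring
      _ ≤ D1 * D1 * K * KJ * (B * (a:ℝ≥0∞) ^ (-γ) * phiInv φ z a) := by gcongr
      _ ≤ D1 * D1 * K * KJ * (D2 * D2 * K * c₂ * phiInv ψ x (S x + H x)) := by
          exact mul_le_mul_right (e5.trans (mul_le_mul_right e6 _)) _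
      _ = ((D1 * D1 * K * KJ * (D2 * D2 * K * c₂) : ℝ≥0) : ℝ≥0∞) * phiInv ψ x (S x + H x) := by
          push_cast; ring
      _ ≤ C0 * phiInv ψ x (S x + H x) := by
          gcongr; rw [hC0]; exact le_self_add
  calc ∫⁻ x, phiE ψ x (fracMaximalComm α b f x / (2 * C0 / κ : ℝ≥0))
      ≤ ∫⁻ x, Lψ * κ * (S x + H x) := by
        apply lintegral_mono_ae
        filter_upwards [main] with x hx
        have e : fracMaximalComm α b f x / ((2 * C0 / κ : ℝ≥0) : ℝ≥0∞) =
            κ * (fracMaximalComm α b f x / ((2 * C0 : ℝ≥0) : ℝ≥0∞)) := by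
          rw [ENNReal.coe_div hκ0.ne', div_eq_mul_inv, div_eq_mul_inv, div_eq_mul_inv, ENNReal.mul_inv (Or.inr (ENNReal.inv_ne_top.2 (ENNReal.coe_ne_zero.2 hκ0.ne'))) (Or.inl ENNReal.coe_ne_top),
            inv_inv]
          ring
        rw [e]
        refine (hLψ x _ κ hκ0 hκ1).trans ?_
        gcongr
    _ = Lψ * κ * (∫⁻ x, S x + H x) := lintegral_const_mul _ (hSm.add hHm)
    _ ≤ Lψ * κ * C' := by
        gcongr
        rw [lintegral_add_left hSm, hC']
        push_cast
        gcongr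
        refine hSi.trans ?_
        gcongr
        exact_mod_cast hGi
    _ = ((Lψ * C' * κ : ℝ≥0) : ℝ≥0∞) := by push_cast; ring
    _ ≤ 1 := by exact_mod_cast hκ.le
end

open MeasureTheory NNReal ENNReal Filter Set

section
variable {n : ℕ} {φ ψ : RSp n → ℝ≥0 → ℝ≥0∞}

lemma cubeAvg_smul (Q : Cube n) (b : RSp n → ℝ) (k : ℝ) : cubeAvg Q (fun x => k * b x) = k * cubeAvg Q b := by
  unfold cubeAvg
  rw [setAverage_eq, setAverage_eq, integral_const_mul]
  simp only [smul_eq_mul]; ring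

lemma bmoNorm_smul (b : RSp n → ℝ) (k : ℝ) : bmoNorm (fun x => k * b x) = ‖k‖₊ * bmoNorm b := by
  unfold bmoNorm
  rw [ENNReal.mul_iSup]
  congr 1; ext Q
  rw [cubeAvg_smul, mul_left_comm, ← lintegral_const_mul' _ _ ENNReal.coe_ne_top]
  congr 2; ext x
  rw [← mul_sub, nnnorm_mul, ENNReal.coe_mul]

lemma fracMaximalComm_smul (α : ℝ) (b f : RSp n → ℝ) (k l : ℝ) (x : RSp n) :
    fracMaximalComm α (fun x => k * b x) (fun x => l * f x) x = ‖k‖₊ * ‖l‖₊ * fracMaximalComm α b f x := by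
  unfold fracMaximalComm
  simp_rw [ENNReal.mul_iSup]
  congr 1; ext Q; congr 1; ext hx
  rw [mul_left_comm, ← lintegral_const_mul' _ _ (ENNReal.mul_ne_top ENNReal.coe_ne_top ENNReal.coe_ne_top)]
  congr 2; ext y
  rw [← mul_sub, nnnorm_mul, nnnorm_mul, ENNReal.coe_mul, ENNReal.coe_mul]; ring

/-- Scaled form. -/
lemma suff_scaled (hφ : IsWeakPhi univ φ) {α : ℝ} {ε C : ℝ≥0} (hε : 0 < ε) (hC : 0 < C)
    (H : ∀ b : RSp n → ℝ, LocallyIntegrable b volume → bmoNorm b ≤ 1 →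
      ∀ f : RSp n → ℝ, AEMeasurable f volume → ∫⁻ x, φ x ‖f x‖₊ ≤ ε →
        ∫⁻ x, phiE ψ x (fracMaximalComm α b f x / C) ≤ 1) :
    ∃ C' : ℝ≥0, ∀ b : RSp n → ℝ, LocallyIntegrable b volume → ∀ κ : ℝ≥0, 0 < κ → bmoNorm b ≤ κ →
      ∀ f : RSp n → ℝ, AEMeasurable f volume → ∀ l : ℝ≥0, 0 < l → ∫⁻ x, φ x (‖f x‖₊ / l) ≤ 1 →
      orliczNormE ψ univ (fracMaximalComm α b f) ≤ C' * κ * l := by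
  obtain ⟨L, hL1, hL⟩ := almost_inc_mul hφ
  obtain ⟨c, hc0, hc1, hc2, -⟩ := exists_small L ε hε
  refine ⟨C / c, fun b hb κ hκ hbκ f hf l hl hfl => ?_⟩
  have hκ' : (κ:ℝ≥0∞) ≠ 0 := by exact_mod_cast hκ.ne'
  have hl' : (l:ℝ≥0∞) ≠ 0 := by exact_mod_cast hl.ne'
  have h1 := H (fun x => ((κ⁻¹ : ℝ≥0) : ℝ) * b x) (hb.smul (((κ⁻¹ : ℝ≥0) : ℝ))) (by
      rw [bmoNorm_smul, NNReal.nnnorm_eq, ENNReal.coe_inv hκ.ne']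
      calc (κ:ℝ≥0∞)⁻¹ * bmoNorm b ≤ (κ:ℝ≥0∞)⁻¹ * κ := by gcongr
        _ = 1 := ENNReal.inv_mul_cancel hκ' ENNReal.coe_ne_top)
    (fun x => ((c / l : ℝ≥0) : ℝ) * f x) (hf.const_mul _) (by
      calc ∫⁻ x, φ x ‖((c / l : ℝ≥0) : ℝ) * f x‖₊ ≤ ∫⁻ x, ((L * c : ℝ≥0):ℝ≥0∞) * φ x (‖f x‖₊ / l) := by
            apply lintegral_mono
            intro x
            have := hL x (‖f x‖₊ / l) c hc0 hc1
            simp only [nnnorm_mul, NNReal.nnnorm_eq]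
            rw [show c / l * ‖f x‖₊ = c * (‖f x‖₊ / l) by ring]
            simpa using this
        _ = ((L * c : ℝ≥0):ℝ≥0∞) * ∫⁻ x, φ x (‖f x‖₊ / l) := lintegral_const_mul' _ _ ENNReal.coe_ne_top
        _ ≤ (ε:ℝ≥0∞) * 1 := by
            gcongr
        _ = ε := mul_one _)
  refine sInf_le ⟨C / c * κ * l, ⟨by positivity, ?_⟩, by push_cast; rfl⟩
  rw [Measure.restrict_univ]
  convert h1 using 4 with x
  rw [fracMaximalComm_smul, NNReal.nnnorm_eq, NNReal.nnnorm_eq, ENNReal.div_eq_inv_mul, ENNReal.div_eq_inv_mul,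
    ← mul_assoc]
  congr 1
  rw [← ENNReal.coe_inv (by positivity), ← ENNReal.coe_inv hC.ne', ← ENNReal.coe_mul, ← ENNReal.coe_mul]
  congr 1
  field_simp

lemma orliczNorm_lt_top (hφ : IsWeakPhi univ φ) {f : RSp n → ℝ} (hf : MemOrlicz φ univ f) :
    orliczNorm φ univ f < ∞ := by
  obtain ⟨hf, l, hl, hfl⟩ := hf
  obtain ⟨L, hL1, hL⟩ := almost_inc_mul hφ
  obtain ⟨T, hT⟩ : ∃ T : ℝ≥0, (T : ℝ≥0∞) = _ := ⟨_, ENNReal.coe_toNNReal hfl.ne⟩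
  obtain ⟨c, hc0, hc1, hc2, -⟩ := exists_small (L * T) 1 one_pos
  refine lt_of_le_of_lt (sInf_le ⟨(c * l)⁻¹, ⟨by positivity, ?_⟩, rfl⟩) ENNReal.coe_lt_top
  calc ∫⁻ x in univ, φ x (‖f x‖₊ / (c * l)⁻¹) ≤ ∫⁻ x in univ, ((L * c : ℝ≥0):ℝ≥0∞) * φ x (l * ‖f x‖₊) := by
        apply lintegral_mono
        intro x
        have := hL x (l * ‖f x‖₊) c hc0 hc1
        simp only [div_inv_eq_mul]
        rw [show ‖f x‖₊ * (c * l) = c * (l * ‖f x‖₊) by ring]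
        simpa using this
    _ = ((L * c : ℝ≥0):ℝ≥0∞) * ∫⁻ x in univ, φ x (l * ‖f x‖₊) := lintegral_const_mul' _ _ ENNReal.coe_ne_top
    _ = ((L * T * c : ℝ≥0):ℝ≥0∞) := by rw [← hT]; push_cast; ring
    _ ≤ 1 := by exact_mod_cast hc2

lemma suff_final (hn : 0 < n) {p r α : ℝ} (hp : 1 < p) (hγ : 0 ≤ α / n) (hr : α / n < r)
    (hφ : IsWeakPhi univ φ) (hψ : IsWeakPhi univ ψ) (hinv : FracInvRel α φ ψ)
    (ha1 : A1 φ) (ha2 : A2 φ) (hainc : AInc p univ φ) (hadec : ADec (1 / r) univ φ) :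
    ∃ C : ℝ≥0, ∀ b : RSp n → ℝ, IsBMO b → ∀ f : RSp n → ℝ, MemOrlicz φ univ f →
      orliczNormE ψ univ (fracMaximalComm α b f) ≤ C * bmoNorm b * orliczNorm φ univ f := by
  obtain ⟨ε, hε, C, hC, h⟩ := suff_modular hn hp hγ hr hφ hψ hinv ha1 ha2 hainc hadec
  obtain ⟨C', hC'⟩ := suff_scaled hφ hε hC h
  refine ⟨C', fun b hb f hf => ?_⟩
  have hft := orliczNorm_lt_top hφ hf
  obtain ⟨F, hF⟩ : ∃ T : ℝ≥0, (T : ℝ≥0∞) = _ := ⟨_, ENNReal.coe_toNNReal hft.ne⟩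
  obtain ⟨B, hB⟩ : ∃ T : ℝ≥0, (T : ℝ≥0∞) = _ := ⟨_, ENNReal.coe_toNNReal hb.2.ne⟩
  have key : ∀ η : ℝ≥0, 0 < η → orliczNormE ψ univ (fracMaximalComm α b f) ≤ ((C' * (B + η) * (F + η) : ℝ≥0):ℝ≥0∞) := by
    intro η hη
    have : orliczNorm φ univ f < ((F + η : ℝ≥0):ℝ≥0∞) := by rw [← hF]; exact_mod_cast lt_add_of_pos_right _ hη
    obtain ⟨_, ⟨l, ⟨hl0, hl1⟩, rfl⟩, hl⟩ := sInf_lt_iff.1 this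
    rw [Measure.restrict_univ] at hl1
    have h2 := hC' b hb.1 (B + η) (by positivity) (by rw [← hB]; exact_mod_cast le_self_add) f
      (by simpa using hf.1) l hl0 hl1
    refine h2.trans ?_
    push_cast
    have hl2 : (l:ℝ≥0∞) ≤ F + η := by
      have h3 := hl.le
      simpa using h3
    gcongr
    
  rw [← hF, ← hB]
  have hcont : Tendsto (fun η : ℝ≥0 => ((C' * (B + η) * (F + η) : ℝ≥0):ℝ≥0∞)) (nhdsWithin 0 (Ioi 0))
      (nhds ((C' * (B + 0) * (F + 0) : ℝ≥0):ℝ≥0∞)) := by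
    have : Continuous (fun η : ℝ≥0 => ((C' * (B + η) * (F + η) : ℝ≥0):ℝ≥0∞)) := by
      apply ENNReal.continuous_coe.comp; fun_prop
    exact (this.tendsto 0).mono_left nhdsWithin_le_nhds
  have hne : (nhdsWithin (0:ℝ≥0) (Ioi 0)).NeBot := inferInstance
  have := ge_of_tendsto hcont (eventually_nhdsWithin_of_forall (s := Ioi 0) fun η hη => key η hη)
  simpa using this
end

open MeasureTheory NNReal ENNReal Filter Set

section
variable {n : ℕ} {φ ψ : RSp n → ℝ≥0 → ℝ≥0∞}

lemma le_phi_of_phiInv_lt (hψ : IsWeakPhi univ ψ) {x : RSp n} {t : ℝ≥0∞} {s : ℝ≥0} (h : phiInv ψ x t < s) :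
    t ≤ ψ x s := by
  obtain ⟨_, ⟨u, hu, rfl⟩, hus⟩ := sInf_lt_iff.1 h
  exact hu.trans (hψ.mono x (mem_univ x) (ENNReal.coe_le_coe.1 hus.le))

lemma le_phiE (x : RSp n) {s : ℝ≥0} {t : ℝ≥0∞} (h : (s:ℝ≥0∞) ≤ t) : φ x s ≤ phiE φ x t :=
  le_iSup₂ (f := fun (s : ℝ≥0) (_ : (s:ℝ≥0∞) ≤ t) => φ x s) s h

lemma phiE_mono (x : RSp n) {s t : ℝ≥0∞} (h : s ≤ t) : phiE φ x s ≤ phiE φ x t :=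
  iSup₂_le fun _ hu => le_phiE x (hu.trans h)

lemma osc_le_two {b : RSp n → ℝ} (hb : LocallyIntegrable b volume) (Q : Cube n) (x : RSp n) {Λ : ℝ≥0∞}
    (h : ∫⁻ y in Q.set, ‖b x - b y‖₊ ≤ Λ * volume Q.set) :
    (volume Q.set)⁻¹ * ∫⁻ y in Q.set, ‖b y - cubeAvg Q b‖₊ ≤ 2 * Λ := by
  have h' : ∫⁻ y in Q.set, (‖b y - b x‖₊ : ℝ≥0∞) ≤ Λ * volume Q.set := by
    refine le_trans (le_of_eq ?_) h
    congr 1; ext y; rw [← nnnorm_neg, neg_sub]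
  have h2 : ENNReal.ofReal |cubeAvg Q b - b x| * volume Q.set ≤ Λ * volume Q.set :=
    (cubeAvg_sub_le hb Q (b x)).trans h'
  have h3 : ∫⁻ y in Q.set, (‖b y - cubeAvg Q b‖₊ : ℝ≥0∞) ≤ 2 * Λ * volume Q.set := by
    calc ∫⁻ y in Q.set, (‖b y - cubeAvg Q b‖₊ : ℝ≥0∞)
        ≤ ∫⁻ y in Q.set, ((‖b y - b x‖₊ : ℝ≥0∞) + ENNReal.ofReal |cubeAvg Q b - b x|) := by
          apply lintegral_mono
          intro y
          have e : ENNReal.ofReal |cubeAvg Q b - b x| = (‖b x - cubeAvg Q b‖₊ : ℝ≥0∞) := by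
            rw [abs_sub_comm, ← Real.norm_eq_abs, ofReal_norm_eq_enorm]; rfl
          rw [e]
          have := nnnorm_add_le (b y - b x) (b x - cubeAvg Q b)
          rw [sub_add_sub_cancel] at this
          beta_reduce
          exact_mod_cast this
      _ = (∫⁻ y in Q.set, (‖b y - b x‖₊ : ℝ≥0∞)) + ENNReal.ofReal |cubeAvg Q b - b x| * volume Q.set := by
          rw [lintegral_add_right _ measurable_const, setLIntegral_const]
      _ ≤ Λ * volume Q.set + Λ * volume Q.set := add_le_add h' h2
      _ = 2 * Λ * volume Q.set := by ring
  calc (volume Q.set)⁻¹ * ∫⁻ y in Q.set, (‖b y - cubeAvg Q b‖₊ : ℝ≥0∞)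
      ≤ (volume Q.set)⁻¹ * (2 * Λ * volume Q.set) := mul_le_mul_right h3 _
    _ = 2 * Λ * ((volume Q.set)⁻¹ * volume Q.set) := by ring
    _ = 2 * Λ := by rw [ENNReal.inv_mul_cancel Q.volume_ne_zero Q.volume_ne_top, mul_one]

set_option maxHeartbeats 2000000 in
lemma necessity {p α : ℝ} (hp : 1 < p)
    (hφ : IsWeakPhi univ φ) (hψ : IsWeakPhi univ ψ) (hinv : FracInvRel α φ ψ)
    (ha1 : A1 φ) (ha2 : A2 φ) (hainc : AInc p univ φ) {b : RSp n → ℝ} (hb : LocallyIntegrable b volume)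
    {C : ℝ≥0} (hC : ∀ f : RSp n → ℝ, MemOrlicz φ univ f →
      orliczNormE ψ univ (fracMaximalComm α b f) ≤ (C : ℝ≥0∞) * orliczNorm φ univ f) :
    ∃ B : ℝ≥0, bmoNorm b ≤ B := by
  have hp0 : 0 < p := by linarith
  set γ := α / (n:ℝ) with hγdef
  set E : ℝ≥0 := 2 ^ n with hE
  have hE0 : 0 < E := by positivity
  have hEof : ENNReal.ofReal (2 ^ n) = E := by
    rw [hE, ENNReal.ofReal]; congr 1
    rw [Real.toNNReal_pow (by norm_num)]; simp
  set ε : ℝ≥0 := (4 * E)⁻¹ with hε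
  have hε0 : 0 < ε := by positivity
  obtain ⟨H, hHm, hH2, hHi, K, hK1, N, hN, hK⟩ := comp_all hφ hp0 hainc ha1 ha2 (ε := ε) (by exact_mod_cast hε0)
  obtain ⟨c₁, c₂, hc₁, hc⟩ := hinv
  obtain ⟨L, hL1, hL⟩ := almost_inc_mul hψ
  have hK0 : 0 < K := zero_lt_one.trans_le hK1
  have hL0 : 0 < L := zero_lt_one.trans_le hL1
  set l0 : ℝ≥0 := C * (2 * K) + 1 with hl0
  have hl00 : 0 < l0 := by positivity
  set K' : ℝ≥0 := K * (2 * E) ^ γ / c₁ with hK'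
  have hK'0 : 0 < K' := by positivity
  set m : ℝ≥0 := 8 * E * L with hm
  have hE1 : 1 ≤ E := by rw [hE]; exact one_le_pow₀ (by norm_num)
  have hm1 : 1 ≤ m := by
    rw [hm]
    calc (1:ℝ≥0) ≤ 8 * 1 * 1 := by norm_num
      _ ≤ 8 * E * L := by gcongr
  have hm0 : 0 < m := zero_lt_one.trans_le hm1
  set Λ : ℝ≥0 := 2 * K' * l0 * m with hΛ
  refine ⟨2 * Λ, iSup_le fun Q => ?_⟩
  suffices hx : ∃ x, ∫⁻ y in Q.set, (‖b x - b y‖₊ : ℝ≥0∞) ≤ Λ * volume Q.set by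
    obtain ⟨x, hx⟩ := hx
    exact_mod_cast osc_le_two hb Q x hx
  obtain ⟨v, hv⟩ : ∃ v : ℝ≥0, (v:ℝ≥0∞) = volume Q.set := ⟨_, ENNReal.coe_toNNReal Q.volume_ne_top⟩
  have hv0 : 0 < v := by
    have := Q.volume_pos; rw [← hv] at this; exact_mod_cast this
  have hv' : (v:ℝ≥0∞) ≠ 0 := by exact_mod_cast hv0.ne'
  set t : ℝ≥0 := (2 * E * v)⁻¹ with ht
  have ht0 : 0 < t := by positivity
  have htE : t * (E * v) = 1 / 2 := by rw [ht]; field_simp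
  have htW : (t:ℝ≥0∞) * (ENNReal.ofReal (2 ^ n) * volume Q.set) ≤ 1 / 2 := by
    rw [hEof, ← hv]
    apply le_of_eq
    rw [← ENNReal.coe_mul, ← ENNReal.coe_mul, htE]; simp
  -- good point
  obtain ⟨z, hzQ, hzN, hzH⟩ := exists_good_pt Q hHm hN
  have hzt : H z ≤ t := by
    refine hzH.trans ?_
    rw [← hv, ← ENNReal.coe_inv hv0.ne']
    calc ((v⁻¹ : ℝ≥0) : ℝ≥0∞) * ∫⁻ x in Q.set, H x ≤ ((v⁻¹ : ℝ≥0) : ℝ≥0∞) * ε :=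
          mul_le_mul_right ((setLIntegral_le_lintegral _ _).trans hHi) _
      _ = ((v⁻¹ * ε : ℝ≥0) : ℝ≥0∞) := by push_cast; rfl
      _ ≤ t := by
          rw [ENNReal.coe_le_coe, hε, ht, ← mul_inv]
          apply inv_anti₀ (by positivity)
          rw [mul_comm v]
          gcongr; norm_num
  obtain ⟨w, hw⟩ : ∃ w : ℝ≥0, (w:ℝ≥0∞) = phiInv φ z t :=
    ⟨_, ENNReal.coe_toNNReal (phiInv_lt_top hφ z ENNReal.coe_lt_top).ne⟩
  have hw0 : 0 < w := by
    have := phiInv_pos hφ z (t := t) (by exact_mod_cast ht0)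
    rw [← hw] at this; exact_mod_cast this
  -- test function
  set f : RSp n → ℝ := Q.set.indicator (fun _ => (w:ℝ)) with hf
  have hfm : Measurable f := measurable_const.indicator Q.measurableSet
  have hφw : ∀ y ∈ Q.set, y ∉ N → φ y (w / (2 * K)) ≤ t + H y := by
    intro y hy hyN
    obtain ⟨h, hh⟩ : ∃ h : ℝ≥0, (h:ℝ≥0∞) = H y :=
      ⟨_, ENNReal.coe_toNNReal (ne_top_of_le_ne_top (by simp) (hH2 y))⟩
    have hh2 : h ≤ 1 / 2 := by
      have := hH2 y
      rw [← hh] at this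
      have e : ((1/2 : ℝ≥0) : ℝ≥0∞) = 1/2 := by simp
      rw [← e] at this
      exact_mod_cast this
    have h1 := hK z hzN y hyN Q hzQ hy (t + h) (by positivity)
      (hzt.trans (by exact_mod_cast le_self_add)) (by rw [← hh]; exact_mod_cast le_add_self)
      (level_cond hh2 htW)
    have h2 : (w:ℝ≥0∞) ≤ K * phiInv φ y (t + h : ℝ≥0) := by
      rw [hw]
      exact (phiInv_mono φ z (by exact_mod_cast le_self_add)).trans h1
    have h3 := phiE_le_of_le_phiInv hφ hK0 h2
    rw [← hh]
    refine le_trans ?_ (h3.trans (by push_cast; exact le_rfl))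
    apply le_phiE
    rw [ENNReal.coe_div (by positivity)]
  have hfI : ∫⁻ x, φ x (‖f x‖₊ / (2 * K)) ≤ 1 := by
    have e : (fun x => φ x (‖f x‖₊ / (2 * K))) = Q.set.indicator (fun x => φ x (w / (2 * K))) := by
      ext x
      by_cases hx : x ∈ Q.set
      · simp [hf, hx]
      · simp [hf, hx, hφ.zero x (mem_univ x)]
    rw [e, lintegral_indicator Q.measurableSet]
    calc ∫⁻ x in Q.set, φ x (w / (2 * K)) ≤ ∫⁻ x in Q.set, (t + H x) := by
          apply lintegral_mono_ae
          rw [ae_restrict_iff' Q.measurableSet]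
          have : ∀ᵐ x ∂(volume : Measure (RSp n)), x ∉ N := by
            rw [ae_iff]; simpa using hN
          filter_upwards [this] with x hxN hx using hφw x hx hxN
      _ = t * v + ∫⁻ x in Q.set, H x := by
          rw [lintegral_add_left measurable_const, setLIntegral_const, hv]
      _ ≤ t * v + ε := by gcongr; exact (setLIntegral_le_lintegral _ _).trans hHi
      _ = ((t * v + ε : ℝ≥0) : ℝ≥0∞) := by push_cast; rfl
      _ ≤ 1 := by
          have h1 : t * v ≤ 1 / 2 := by
            rw [← htE]; gcongr; exact le_mul_of_one_le_left zero_le hE1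
          have h2 : ε ≤ 1 / 2 := by
            rw [hε, one_div]; apply inv_anti₀ (by norm_num)
            calc (2:ℝ≥0) ≤ 4 * 1 := by norm_num
              _ ≤ 4 * E := by gcongr
          have : t * v + ε ≤ 1 := (add_le_add h1 h2).trans (by norm_num)
          exact_mod_cast this
  have hfmem : MemOrlicz φ univ f := by
    refine ⟨hfm.aemeasurable, (2 * K)⁻¹, by positivity, ?_⟩
    rw [Measure.restrict_univ]
    refine lt_of_le_of_lt (le_trans (le_of_eq ?_) hfI) (by simp)
    congr 1; ext x; rw [div_eq_inv_mul]
  have hfn : orliczNorm φ univ f ≤ ((2 * K : ℝ≥0) : ℝ≥0∞) :=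
    sInf_le ⟨2 * K, ⟨by positivity, by rw [Measure.restrict_univ]; exact hfI⟩, rfl⟩
  have hMlt : orliczNormE ψ univ (fracMaximalComm α b f) < l0 := by
    refine ((hC f hfmem).trans (mul_le_mul_right hfn _)).trans_lt ?_
    rw [← ENNReal.coe_mul, ENNReal.coe_lt_coe, hl0]
    exact lt_add_of_pos_right _ one_pos
  obtain ⟨_, ⟨l, ⟨hlpos, hlI⟩, rfl⟩, hl⟩ := sInf_lt_iff.1 hMlt
  rw [Measure.restrict_univ] at hlI
  have hMI : ∫⁻ x, phiE ψ x (fracMaximalComm α b f x / l0) ≤ 1 := by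
    refine (lintegral_mono fun x => ?_).trans hlI
    exact phiE_mono x (ENNReal.div_le_div_left hl.le _)
  by_contra hcon
  push Not at hcon
  set u : ℝ≥0 := v ^ γ * w with hu
  have hu0 : 0 < u := by positivity
  -- pointwise lower bound of the maximal function
  have hM : ∀ x ∈ Q.set, ((u * Λ : ℝ≥0) : ℝ≥0∞) ≤ fracMaximalComm α b f x := by
    intro x hx
    calc ((u * Λ : ℝ≥0) : ℝ≥0∞) = volume Q.set ^ (γ - 1) * (Λ * volume Q.set * w) := by
          rw [ENNReal.rpow_sub _ _ Q.volume_ne_zero Q.volume_ne_top, ENNReal.rpow_one, ← hv, hu,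
            ENNReal.coe_mul, ENNReal.coe_mul, ENNReal.coe_rpow_of_ne_zero hv0.ne', ENNReal.div_eq_inv_mul]
          have := ENNReal.inv_mul_cancel hv' ENNReal.coe_ne_top
          calc (v:ℝ≥0∞) ^ γ * w * Λ = (v:ℝ≥0∞) ^ γ * w * Λ * ((v:ℝ≥0∞)⁻¹ * v) := by rw [this, mul_one]
            _ = _ := by ring
      _ ≤ volume Q.set ^ (γ - 1) * ((∫⁻ y in Q.set, (‖b x - b y‖₊ : ℝ≥0∞)) * w) :=
          mul_le_mul_right (mul_le_mul_left (hcon x).le _) _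
      _ = volume Q.set ^ (γ - 1) * ∫⁻ y in Q.set, (‖b x - b y‖₊ : ℝ≥0∞) * (‖f y‖₊ : ℝ≥0∞) := by
          congr 1
          rw [← lintegral_mul_const' _ _ ENNReal.coe_ne_top]
          apply setLIntegral_congr_fun Q.measurableSet
          intro y hy
          simp [hf, hy]
      _ ≤ fracMaximalComm α b f x :=
          le_iSup₂ (f := fun (Q : Cube n) (_ : x ∈ Q.set) => volume Q.set ^ (α / (n : ℝ) - 1) *
            ∫⁻ y in Q.set, (‖b x - b y‖₊ : ℝ≥0∞) * (‖f y‖₊ : ℝ≥0∞) ∂volume) Q hx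
  -- pointwise lower bound on the good set
  set S : Set (RSp n) := Q.set ∩ {x | H x ≤ t} with hS
  have hSm : MeasurableSet S := Q.measurableSet.inter (hHm measurableSet_Iic)
  have hlow : ∀ x ∈ S, x ∉ N → ((m / L * t : ℝ≥0) : ℝ≥0∞) ≤ phiE ψ x (fracMaximalComm α b f x / l0) := by
    intro x hx hxN
    have h1 := hK x hxN z hzN Q hx.1 hzQ t ht0 hx.2 hzt (Or.inr (htW.trans (by simp)))
    rw [← hw] at h1
    have h2 := (hc x t ht0).1.trans h1
    have htγ : (t:ℝ≥0∞) ^ γ = ((t ^ γ : ℝ≥0) : ℝ≥0∞) := (ENNReal.coe_rpow_of_ne_zero ht0.ne' _).symm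
    rw [← hγdef, htγ] at h2
    obtain ⟨X, hX⟩ : ∃ X : ℝ≥0, (X:ℝ≥0∞) = phiInv ψ x t :=
      ⟨_, ENNReal.coe_toNNReal (phiInv_lt_top hψ x ENNReal.coe_lt_top).ne⟩
    rw [← hX] at h2
    have h3 : c₁ * (t ^ γ * X) ≤ K * w := by exact_mod_cast h2
    have htv : t ^ γ * ((2 * E) ^ γ * v ^ γ) = 1 := by
      rw [← NNReal.mul_rpow, ← NNReal.mul_rpow, ht, inv_mul_cancel₀ (by positivity), NNReal.one_rpow]
    have h4 : X ≤ K' * u := by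
      calc X = (c₁ * (t ^ γ * X)) * (((2 * E) ^ γ * v ^ γ) / c₁) := by
            calc X = (t ^ γ * ((2 * E) ^ γ * v ^ γ)) * X := by rw [htv, one_mul]
              _ = _ := by field_simp
        _ ≤ (K * w) * (((2 * E) ^ γ * v ^ γ) / c₁) := by gcongr
        _ = K' * u := by rw [hK', hu]; ring
    have h5 : (t:ℝ≥0∞) ≤ ψ x (2 * K' * u) := by
      apply le_phi_of_phiInv_lt hψ
      rw [← hX]
      have : X < 2 * K' * u := by
        refine h4.trans_lt ?_
        have : 0 < K' * u := by positivity
        calc K' * u < K' * u + K' * u := lt_add_of_pos_right _ this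
          _ = 2 * K' * u := by ring
      exact_mod_cast this
    have h6 := hL x (m * (2 * K' * u)) m⁻¹ (by positivity) (inv_le_one_of_one_le₀ hm1)
    rw [inv_mul_cancel_left₀ hm0.ne'] at h6
    have h7 : ((m / L * t : ℝ≥0) : ℝ≥0∞) ≤ ψ x (m * (2 * K' * u)) := by
      have := h5.trans h6
      calc ((m / L * t : ℝ≥0) : ℝ≥0∞) = ((m / L : ℝ≥0) : ℝ≥0∞) * t := by push_cast; rfl
        _ ≤ ((m / L : ℝ≥0) : ℝ≥0∞) * (L * (m⁻¹ : ℝ≥0) * ψ x (m * (2 * K' * u))) := mul_le_mul_right this _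
        _ = ((m / L * (L * m⁻¹) : ℝ≥0) : ℝ≥0∞) * ψ x (m * (2 * K' * u)) := by push_cast; ring
        _ = ψ x (m * (2 * K' * u)) := by
            rw [show m / L * (L * m⁻¹) = 1 by field_simp]; simp
    refine h7.trans (le_phiE x ?_)
    rw [ENNReal.le_div_iff_mul_le (Or.inl (by exact_mod_cast hl00.ne')) (Or.inl ENNReal.coe_ne_top)]
    refine le_trans (le_of_eq ?_) (hM x hx.1)
    rw [← ENNReal.coe_mul]
    congr 1
    rw [hΛ]; ring
  have hSv : (ε:ℝ≥0∞) ≤ t * volume S := by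
    have h1 : volume Q.set ≤ volume S + volume {x | (t:ℝ≥0∞) ≤ H x} := by
      refine le_trans (measure_mono ?_) (measure_union_le _ _)
      intro x hx
      by_cases h : H x ≤ t
      · exact Or.inl ⟨hx, h⟩
      · exact Or.inr (not_le.1 h).le
    have h2 := (mul_meas_ge_le_lintegral hHm (t:ℝ≥0∞)).trans hHi
    have h3 : (ε:ℝ≥0∞) + ε ≤ t * volume S + ε := by
      calc (ε:ℝ≥0∞) + ε = ((t * v : ℝ≥0) : ℝ≥0∞) := by
            rw [← ENNReal.coe_add]; congr 1
            rw [hε, ht]; field_simp; norm_num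
        _ = t * volume Q.set := by rw [← hv]; push_cast; rfl
        _ ≤ t * (volume S + volume {x | (t:ℝ≥0∞) ≤ H x}) := mul_le_mul_right h1 _
        _ = t * volume S + t * volume {x | (t:ℝ≥0∞) ≤ H x} := mul_add _ _ _
        _ ≤ t * volume S + ε := by gcongr
    exact (ENNReal.add_le_add_iff_right ENNReal.coe_ne_top).1 h3
  have hfin : ((m / L * ε : ℝ≥0) : ℝ≥0∞) ≤ 1 := by
    calc ((m / L * ε : ℝ≥0) : ℝ≥0∞) = ((m / L : ℝ≥0) : ℝ≥0∞) * ε := by push_cast; rfl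
      _ ≤ ((m / L : ℝ≥0) : ℝ≥0∞) * (t * volume S) := mul_le_mul_right hSv _
      _ = ∫⁻ x in S, ((m / L * t : ℝ≥0) : ℝ≥0∞) := by rw [setLIntegral_const]; push_cast; ring
      _ ≤ ∫⁻ x in S, phiE ψ x (fracMaximalComm α b f x / l0) := by
          apply lintegral_mono_ae
          rw [ae_restrict_iff' hSm]
          have : ∀ᵐ x ∂(volume : Measure (RSp n)), x ∉ N := by
            rw [ae_iff]; simpa using hN
          filter_upwards [this] with x hxN hx using hlow x hx hxN
      _ ≤ ∫⁻ x, phiE ψ x (fracMaximalComm α b f x / l0) := setLIntegral_le_lintegral _ _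
      _ ≤ 1 := hMI
  have h2 : m / L * ε = 2 := by rw [hm, hε]; field_simp; norm_num
  rw [h2] at hfin
  norm_num at hfin
end

/-- the fractional maximal commutator `M_{b,α} : L^φ(ℝⁿ) → L^ψ(ℝⁿ)`
is bounded if and only if `b ∈ BMO(ℝⁿ)`, and in that case
`‖M_{b,α}f‖_ψ ≤ C‖b‖_*‖f‖_φ`. -/
theorem statement13 {n : ℕ} (hn : 0 < n) (b : RSp n → ℝ)
    (hb : LocallyIntegrable b volume) (p q α r : ℝ)
    (φ ψ : RSp n → ℝ≥0 → ℝ≥0∞)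
    (hp : 1 < p) (hpq : p ≤ q) (hα : α / (n : ℝ) = 1 / p - 1 / q)
    (hφ : IsWeakPhi Set.univ φ) (hψ : IsWeakPhi Set.univ ψ)
    (hinv : FracInvRel α φ ψ)
    (hr₁ : α / (n : ℝ) < r) (hr₂ : r ≤ 1 / p)
    (ha0 : A0 Set.univ φ) (ha1 : A1 φ) (ha2 : A2 φ)
    (hainc : AInc p Set.univ φ) (hadec : ADec (1 / r) Set.univ φ) :
    ((∃ C : ℝ≥0, ∀ f : RSp n → ℝ, MemOrlicz φ Set.univ f →
      orliczNormE ψ Set.univ (fracMaximalComm α b f) ≤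
        (C : ℝ≥0∞) * orliczNorm φ Set.univ f) ↔ IsBMO b) ∧
    (IsBMO b → ∃ C : ℝ≥0, ∀ f : RSp n → ℝ, MemOrlicz φ Set.univ f →
      orliczNormE ψ Set.univ (fracMaximalComm α b f) ≤
        (C : ℝ≥0∞) * bmoNorm b * orliczNorm φ Set.univ f) := by
  have hγ : 0 ≤ α / (n : ℝ) := by
    rw [hα, sub_nonneg]
    exact one_div_le_one_div_of_le (by linarith) hpq
  obtain ⟨C, hC⟩ := suff_final hn hp hγ hr₁ hφ hψ hinv ha1 ha2 hainc hadec
  refine ⟨⟨?_, ?_⟩, fun h => ⟨C, fun f hf => hC b h f hf⟩⟩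
  · rintro ⟨C, hC⟩
    obtain ⟨B, hB⟩ := necessity hp hφ hψ hinv ha1 ha2 hainc hb hC
    exact ⟨hb, hB.trans_lt ENNReal.coe_lt_top⟩
  · intro h
    refine ⟨C * (bmoNorm b).toNNReal, fun f hf => ?_⟩
    rw [ENNReal.coe_mul, ENNReal.coe_toNNReal h.2.ne]
    exact hC b h f hf
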